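/- arXiv:1802.02901 — 3 statements merged into one kernel-verified Lean document; each statement's English description precedes it below -/
import Mathlib

section
/- Let (a_n)_{n∈ℕ} be a sequence of distinct positive integers and for N ∈ ℕ let A_N denote the set of the first N elements of the sequence. If E(A_N) = Ω(N³), i.e., there exists κ > 0 such that E(A_N) ≥ κN³ for infinitely many N, then for every real number α the sequence ({a_n α})_{n∈ℕ} of fractional parts does not have Poissonian pair correlations. -/
/-!
The proof compares a lower and an upper bound for a localised additive energy.

Suppose `{a_n α}` has Poissonian pair correlations, and for an integer `δ` let `r(δ)` be the number
of pairs `i, j ≤ N` with `a_i - a_j = δ`. All these pairs have the same distance `‖δα‖`. Comparing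
the pair counts at the ends of a short window around `N‖δα‖`, one sees that for every fixed `S` and
`ε` and all large `N`, every `δ ≠ 0` with `‖δα‖ ≤ S/N` satisfies `r(δ) ≤ εN` (`rep_le`).

Cut the circle into `M ≈ N/S` arcs and let `L` be the number of solutions of `a_i - a_j = a_k - a_l`
with `{a_i α}` and `{a_k α}` in the same arc. By Cauchy–Schwarz (`card_pairs_le`) we have
`E(A_N) ≤ M L`, hence `L ≥ κSN²/2` infinitely often. On the other hand such a solution also satisfies
`a_i - a_k = a_j - a_l`, so `L ≤ ∑ r(δ)²` over `‖δα‖ ≤ S/N`. The term `δ = 0` gives `N²`, and the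
others at most `εN ∑ r(δ) ≤ 3εSN²` (`local_le`). For `S = 4/κ` and `ε = κ/24` this is a
contradiction. Neither the Balog–Szemerédi–Gowers theorem nor Freiman's theorem is needed.
-/

open Finset Filter
open scoped Classical

/-- Distance to the nearest integer. -/
noncomputable def nint (x : ℝ) : ℝ := |x - round x|

/-- Number of pairs `1 ≤ i ≠ j ≤ N` with `‖x i - x j‖ ≤ s / N`. -/
noncomputable def pairCount (x : ℕ → ℝ) (N : ℕ) (s : ℝ) : ℕ :=
  (((Finset.Icc 1 N) ×ˢ (Finset.Icc 1 N)).filter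
    fun p => p.1 ≠ p.2 ∧ nint (x p.1 - x p.2) ≤ s / N).card

/-- A sequence in `[0,1)` has Poissonian pair correlations. -/
noncomputable def PoissonianPairCorrelations (x : ℕ → ℝ) : Prop :=
  ∀ s : ℝ, 0 < s →
    Tendsto (fun N : ℕ => (pairCount x N s : ℝ) / N) atTop (nhds (2 * s))

/-- The additive energy of a finite set of integers: the number of quadruples
`(a,b,c,d) ∈ A⁴` with `a + b = c + d`. -/
def addEnergy (A : Finset ℤ) : ℕ :=
  (((A ×ˢ A) ×ˢ (A ×ˢ A)).filter fun q => q.1.1 + q.1.2 = q.2.1 + q.2.2).card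

/-- The set of the first `N` elements of the sequence `a` (indexed from 1). -/
def firstN (a : ℕ → ℕ) (N : ℕ) : Finset ℤ :=
  (Finset.Icc 1 N).image fun n => (a n : ℤ)

lemma nint_sub_int (x : ℝ) (m : ℤ) : nint (x - m) = nint x := by
  unfold nint
  rw [round_sub_intCast]
  push_cast
  congr 1
  ring

lemma nint_fract_sub (x y : ℝ) : nint (Int.fract x - Int.fract y) = nint (x - y) := by
  rw [← nint_sub_int (x - y) (⌊x⌋ - ⌊y⌋)]
  congr 1
  unfold Int.fract
  push_cast
  ring

lemma nint_le_abs (x : ℝ) : nint x ≤ |x| := by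
  simpa [nint] using round_le x 0

/-- Cauchy–Schwarz: refining the fibres of `f` by a labelling with `M` values decreases the number
of pairs in a common fibre by a factor of at most `M`. -/
lemma card_pairs_le {ι β : Type*} [DecidableEq β] (P : Finset ι) (f : ι → β) (g : ι → ℕ) (M : ℕ)
    (hg : ∀ p ∈ P, g p < M) :
    ((P ×ˢ P).filter fun q => f q.1 = f q.2).card ≤
      M * ((P ×ˢ P).filter fun q => f q.1 = f q.2 ∧ g q.1 = g q.2).card := by
  have h1 : ((P ×ˢ P).filter fun q => f q.1 = f q.2).card
      = ∑ y ∈ P.image f, (P.filter fun p => f p = y).card ^ 2 := by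
    rw [Finset.card_eq_sum_card_fiberwise (f := fun q => f q.1) (t := P.image f)]
    · refine Finset.sum_congr rfl fun y _ => ?_
      rw [sq, ← Finset.card_product]
      congr 1
      ext ⟨p, q⟩
      simp only [Finset.mem_filter, Finset.mem_product]
      grind
    · intro q hq
      simp only [Finset.coe_filter, Finset.mem_product, Set.mem_ofPred_eq] at hq
      exact Finset.mem_coe.2 (Finset.mem_image_of_mem f hq.1.1)
  have h2 : ((P ×ˢ P).filter fun q => f q.1 = f q.2 ∧ g q.1 = g q.2).card
      = ∑ y ∈ P.image f, ∑ m ∈ Finset.range M, (P.filter fun p => f p = y ∧ g p = m).card ^ 2 := by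
    rw [← Finset.sum_product',
      Finset.card_eq_sum_card_fiberwise (f := fun q => (f q.1, g q.1))
        (t := P.image f ×ˢ Finset.range M)]
    · refine Finset.sum_congr rfl fun y _ => ?_
      rw [sq, ← Finset.card_product]
      congr 1
      ext ⟨p, q⟩
      simp only [Finset.mem_filter, Finset.mem_product, Prod.ext_iff]
      grind
    · intro q hq
      simp only [Finset.coe_filter, Finset.mem_product, Set.mem_ofPred_eq] at hq
      exact Finset.mem_coe.2 (Finset.mem_product.2
        ⟨Finset.mem_image_of_mem f hq.1.1, Finset.mem_range.2 (hg _ hq.1.1)⟩)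
  rw [h1, h2, Finset.mul_sum]
  refine Finset.sum_le_sum fun y _ => ?_
  have h3 : (P.filter fun p => f p = y).card
      = ∑ m ∈ Finset.range M, (P.filter fun p => f p = y ∧ g p = m).card := by
    rw [Finset.card_eq_sum_card_fiberwise (f := g) (t := Finset.range M)]
    · simp only [Finset.filter_filter]
    · intro q hq
      simp only [Finset.coe_filter, Set.mem_ofPred_eq] at hq
      exact Finset.mem_coe.2 (Finset.mem_range.2 (hg _ hq.1))
  rw [h3]
  simpa using sq_sum_le_card_mul_sum_sq (s := Finset.range M)
    (f := fun m => (P.filter fun p => f p = y ∧ g p = m).card)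

/-- The number of representations of `δ` as `a i - a j` with `1 ≤ i, j ≤ N`. -/
noncomputable def repCount (a : ℕ → ℕ) (N : ℕ) (δ : ℤ) : ℕ :=
  ((Finset.Icc 1 N ×ˢ Finset.Icc 1 N).filter fun p => (a p.1 : ℤ) - a p.2 = δ).card

lemma nint_congr (a : ℕ → ℕ) (α : ℝ) {i j k l : ℕ} (h : (a k : ℤ) - a l = a i - a j) :
    nint (Int.fract ((a k : ℝ) * α) - Int.fract ((a l : ℝ) * α))
      = nint (Int.fract ((a i : ℝ) * α) - Int.fract ((a j : ℝ) * α)) := by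
  rw [nint_fract_sub, nint_fract_sub, ← sub_mul, ← sub_mul]
  have : (a k : ℝ) - a l = a i - a j := by exact_mod_cast h
  rw [this]

/-- All representations of a nonzero difference lie in every window `(u, v]` containing its
rescaled distance. -/
lemma repCount_add_le (a : ℕ → ℕ) (ha : Function.Injective a) (α : ℝ) (N i j : ℕ) (hij : i ≠ j)
    (u v : ℝ) (huv : u ≤ v)
    (hu : u / N < nint (Int.fract ((a i : ℝ) * α) - Int.fract ((a j : ℝ) * α)))
    (hv : nint (Int.fract ((a i : ℝ) * α) - Int.fract ((a j : ℝ) * α)) ≤ v / N) :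
    repCount a N ((a i : ℤ) - a j) + pairCount (fun n => Int.fract ((a n : ℝ) * α)) N u
      ≤ pairCount (fun n => Int.fract ((a n : ℝ) * α)) N v := by
  unfold repCount pairCount
  rw [← Finset.card_union_of_disjoint]
  · refine Finset.card_le_card ?_
    intro p hp
    rw [Finset.mem_union, Finset.mem_filter, Finset.mem_filter] at hp
    rw [Finset.mem_filter]
    rcases hp with ⟨hp, h⟩ | ⟨hp, h1, h2⟩
    · refine ⟨hp, ?_, ?_⟩
      · intro h'
        rw [h'] at h
        apply hij
        apply ha
        omega
      · rw [nint_congr a α h]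
        exact hv
    · exact ⟨hp, h1, h2.trans (by gcongr)⟩
  · rw [Finset.disjoint_left]
    intro p hp hp'
    rw [Finset.mem_filter] at hp hp'
    have h := hp'.2.2
    rw [nint_congr a α hp.2] at h
    exact absurd h (not_le.2 hu)

/-- Under Poissonian pair correlations no nonzero difference at distance `O(1/N)` has a positive
proportion of `N` representations. -/
lemma rep_le (a : ℕ → ℕ) (ha : Function.Injective a) (α : ℝ)
    (hP : PoissonianPairCorrelations (fun n => Int.fract ((a n : ℝ) * α)))
    (S ε : ℝ) (hε : 0 < ε) :
    ∀ᶠ N : ℕ in atTop, ∀ i j : ℕ, i ≠ j →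
      nint (Int.fract ((a i : ℝ) * α) - Int.fract ((a j : ℝ) * α)) ≤ S / N →
      (repCount a N ((a i : ℤ) - a j) : ℝ) ≤ ε * N := by
  -- Grid of mesh `η`; the windows `((m - 1) η, (m + 1) η]` have length `2 η`, and two errors `η`
  -- are allowed, so that the count is at most `4 η + 2 η = ε` times `N`.
  obtain ⟨η, hη, rfl⟩ : ∃ η : ℝ, 0 < η ∧ ε = 6 * η := ⟨ε / 6, by positivity, by ring⟩
  set x : ℕ → ℝ := fun n => Int.fract ((a n : ℝ) * α) with hx
  have key : ∀ᶠ N : ℕ in atTop, ∀ m ∈ Finset.range (⌊S / η⌋₊ + 1),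
      2 * (((m : ℝ) - 1) * η) - η ≤ (pairCount x N (((m : ℝ) - 1) * η) : ℝ) / N ∧
      (pairCount x N (((m : ℝ) + 1) * η) : ℝ) / N ≤ 2 * (((m : ℝ) + 1) * η) + η := by
    rw [Filter.eventually_all_finset]
    intro m _
    apply Filter.Eventually.and
    · by_cases hm : 2 ≤ m
      · have hm' : (2 : ℝ) ≤ m := by exact_mod_cast hm
        have := hP (((m : ℝ) - 1) * η) (mul_pos (by linarith) hη)
        exact this.eventually_const_le (by linarith)
      · refine Filter.Eventually.of_forall fun N => ?_
        have hm' : (m : ℝ) ≤ 1 := by exact_mod_cast (by omega : m ≤ 1)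
        refine le_trans ?_ (by positivity : (0 : ℝ) ≤ _)
        nlinarith
    · have := hP (((m : ℝ) + 1) * η) (by positivity)
      exact this.eventually_le_const (by linarith)
  filter_upwards [key, Filter.eventually_ge_atTop 1] with N hN hN1 i j hij hS
  have hN0 : (0 : ℝ) < N := by exact_mod_cast hN1
  set t : ℝ := nint (x i - x j) * N with ht
  have ht0 : 0 ≤ t := by
    have : 0 ≤ nint (x i - x j) := abs_nonneg _
    positivity
  have htS : t ≤ S := by
    rw [ht]
    exact (le_div_iff₀ hN0).1 hS
  have hm1 : (⌊t / η⌋₊ : ℝ) * η ≤ t := by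
    rw [← le_div_iff₀ hη]
    exact Nat.floor_le (by positivity)
  have hm2 : t < ((⌊t / η⌋₊ : ℝ) + 1) * η := by
    rw [← div_lt_iff₀ hη]
    exact Nat.lt_floor_add_one _
  have hmK : ⌊t / η⌋₊ ∈ Finset.range (⌊S / η⌋₊ + 1) := by
    rw [Finset.mem_range, Nat.lt_succ_iff]
    exact Nat.floor_le_floor (by gcongr)
  obtain ⟨h1, h2⟩ := hN _ hmK
  have h3 := repCount_add_le a ha α N i j hij (((⌊t / η⌋₊ : ℝ) - 1) * η)
    (((⌊t / η⌋₊ : ℝ) + 1) * η) (by nlinarith)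
    (by rw [div_lt_iff₀ hN0]; change _ < t; nlinarith)
    (by rw [le_div_iff₀ hN0]; exact hm2.le)
  have h3' : (repCount a N ((a i : ℤ) - a j) : ℝ) + (pairCount x N (((⌊t / η⌋₊ : ℝ) - 1) * η) : ℝ)
      ≤ (pairCount x N (((⌊t / η⌋₊ : ℝ) + 1) * η) : ℝ) := by exact_mod_cast h3
  rw [le_div_iff₀ hN0] at h1
  rw [div_le_iff₀ hN0] at h2
  nlinarith

lemma addEnergy_le (a : ℕ → ℕ) (N : ℕ) :
    _root_.addEnergy (firstN a N) ≤
      (((Finset.Icc 1 N ×ˢ Finset.Icc 1 N) ×ˢ (Finset.Icc 1 N ×ˢ Finset.Icc 1 N)).filter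
        fun q => (a q.1.1 : ℤ) - a q.1.2 = a q.2.1 - a q.2.2).card := by
  unfold _root_.addEnergy firstN
  -- The index quadruple `((i, j), (k, l))` yields the solution `a i + a l = a k + a j`.
  refine Finset.card_le_card_of_surjOn
    (fun q => (((a q.1.1 : ℤ), (a q.2.2 : ℤ)), ((a q.2.1 : ℤ), (a q.1.2 : ℤ)))) ?_
  rintro ⟨⟨x, y⟩, ⟨z, w⟩⟩ hq
  simp only [Finset.coe_filter, Finset.mem_product, Finset.mem_image, Set.mem_ofPred_eq] at hq
  obtain ⟨⟨⟨⟨i, hi, rfl⟩, ⟨l, hl, rfl⟩⟩, ⟨⟨k, hk, rfl⟩, ⟨j, hj, rfl⟩⟩⟩, h⟩ := hq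
  refine ⟨((i, j), (k, l)), ?_, rfl⟩
  simp only [Finset.coe_filter, Finset.mem_product, Set.mem_ofPred_eq]
  exact ⟨⟨⟨hi, hj⟩, ⟨hk, hl⟩⟩, by omega⟩

/-- Upper bound for the energy localised to indices with a common label `φ`: a solution
`((i, j), (k, l))` with `i ≠ k` is determined by the close pair `(i, k)` and by the representation
`(j, l)` of `a i - a k`. -/
lemma local_le (a : ℕ → ℕ) (ha : Function.Injective a) (x : ℕ → ℝ) (φ : ℕ → ℕ) (N R : ℕ) (S : ℝ)
    (hφ : ∀ i k, φ i = φ k → nint (x i - x k) ≤ S / N)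
    (hR : ∀ i k, i ≠ k → nint (x i - x k) ≤ S / N → repCount a N ((a i : ℤ) - a k) ≤ R) :
    (((Finset.Icc 1 N ×ˢ Finset.Icc 1 N) ×ˢ (Finset.Icc 1 N ×ˢ Finset.Icc 1 N)).filter
        fun q => (a q.1.1 : ℤ) - a q.1.2 = a q.2.1 - a q.2.2 ∧ φ q.1.1 = φ q.2.1).card
      ≤ N ^ 2 + pairCount x N S * R := by
  set I := Finset.Icc 1 N with hI
  set C := (I ×ˢ I).filter fun p => p.1 ≠ p.2 ∧ nint (x p.1 - x p.2) ≤ S / N with hC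
  set D := (I ×ˢ I).image fun p => (p, p) with hD
  set F := C.biUnion fun p =>
    ((I ×ˢ I).filter fun p' => (a p'.1 : ℤ) - a p'.2 = a p.1 - a p.2).image
      fun p' => ((p.1, p'.1), (p.2, p'.2)) with hF
  have hD' : D.card ≤ N ^ 2 := by
    refine Finset.card_image_le.trans ?_
    rw [Finset.card_product, hI, Nat.card_Icc, Nat.add_sub_cancel, sq]
  have hF' : F.card ≤ pairCount x N S * R := by
    refine Finset.card_biUnion_le_card_mul _ _ _ fun p hp => Finset.card_image_le.trans ?_
    rw [hC, Finset.mem_filter] at hp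
    exact hR _ _ hp.2.1 hp.2.2
  refine le_trans (Finset.card_le_card ?_)
    ((Finset.card_union_le D F).trans (Nat.add_le_add hD' hF'))
  rintro ⟨⟨i, j⟩, ⟨k, l⟩⟩ hq
  simp only [Finset.mem_filter, Finset.mem_product] at hq
  obtain ⟨⟨⟨hi, hj⟩, ⟨hk, hl⟩⟩, h, hl'⟩ := hq
  rw [Finset.mem_union]
  by_cases hik : i = k
  · left
    subst hik
    have : j = l := ha (by omega)
    subst this
    exact Finset.mem_image.2 ⟨(i, j), Finset.mem_product.2 ⟨hi, hj⟩, rfl⟩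
  · right
    refine Finset.mem_biUnion.2 ⟨(i, k), ?_, Finset.mem_image.2 ⟨(j, l), ?_, rfl⟩⟩
    · exact Finset.mem_filter.2 ⟨Finset.mem_product.2 ⟨hi, hk⟩, hik, hφ _ _ hl'⟩
    · refine Finset.mem_filter.2 ⟨Finset.mem_product.2 ⟨hj, hl⟩, ?_⟩
      change (a j : ℤ) - a l = a i - a k
      omega

theorem stmt0 (a : ℕ → ℕ) (ha_inj : Function.Injective a) (ha_pos : ∀ n, 0 < a n)
    (hE : ∃ κ : ℝ, 0 < κ ∧
      ∃ᶠ N : ℕ in atTop, κ * (N : ℝ) ^ 3 ≤ (addEnergy (firstN a N) : ℝ)) :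
    ∀ α : ℝ, ¬ PoissonianPairCorrelations (fun n => Int.fract ((a n : ℝ) * α)) := by
  intro α hP
  obtain ⟨κ, hκ, hfreq⟩ := hE
  have hS : 0 < 4 / κ := by positivity
  have hpc := (hP (4 / κ) hS).eventually_le_const (u := 3 * (4 / κ)) (by linarith)
  have hrep := rep_le a ha_inj α hP (4 / κ) (κ / 24) (by positivity)
  obtain ⟨N, hN, hpc, hrep, hN1, hNS⟩ := (hfreq.and_eventually (hpc.and (hrep.and
    ((Filter.eventually_ge_atTop 1).and (Filter.eventually_ge_atTop ⌈4 / κ⌉₊))))).exists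
  have hN0 : (0 : ℝ) < N := by exact_mod_cast hN1
  have hNS' : 4 / κ ≤ N := Nat.ceil_le.1 hNS
  rw [div_le_iff₀ hN0] at hpc
  set x : ℕ → ℝ := fun n => Int.fract ((a n : ℝ) * α) with hx
  -- The circle is cut into `M` arcs of length `1 / M ≤ S / N`, where `S = 4 / κ`.
  set M : ℕ := ⌈(N : ℝ) / (4 / κ)⌉₊ with hM
  have hM1 : (N : ℝ) / (4 / κ) ≤ M := Nat.le_ceil _
  have hM0 : (0 : ℝ) < M := lt_of_lt_of_le (by positivity) hM1
  have hM2 : (M : ℝ) ≤ N * κ / 2 := by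
    have h1 : (M : ℝ) < (N : ℝ) / (4 / κ) + 1 := Nat.ceil_lt_add_one (by positivity)
    have h2 : (N : ℝ) / (4 / κ) = N * κ / 4 := by field_simp
    have h3 : 4 ≤ N * κ := by rwa [div_le_iff₀ hκ] at hNS'
    linarith
  have hMN : 1 / (M : ℝ) ≤ 4 / κ / N := by
    rw [div_le_div_iff₀ hM0 hN0]
    rw [div_le_iff₀ hS] at hM1
    linarith
  set φ : ℕ → ℕ := fun n => ⌊x n * M⌋₊ with hφ
  have hx0 : ∀ n, 0 ≤ x n := fun n => Int.fract_nonneg _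
  have hφM : ∀ n, φ n < M := by
    intro n
    have h1 : x n < 1 := Int.fract_lt_one _
    rw [hφ]
    change ⌊x n * M⌋₊ < M
    rw [Nat.floor_lt (mul_nonneg (hx0 n) hM0.le)]
    nlinarith
  have hφclose : ∀ i k, φ i = φ k → nint (x i - x k) ≤ 4 / κ / N := by
    intro i k h
    refine (nint_le_abs _).trans (le_trans ?_ hMN)
    have i1 := Nat.floor_le (mul_nonneg (hx0 i) hM0.le)
    have i2 := Nat.lt_floor_add_one (x i * M)
    have k1 := Nat.floor_le (mul_nonneg (hx0 k) hM0.le)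
    have k2 := Nat.lt_floor_add_one (x k * M)
    have h' : (⌊x i * M⌋₊ : ℝ) = ⌊x k * M⌋₊ := by exact_mod_cast h
    have habs : |x i - x k| * (M : ℝ) = |(x i - x k) * M| := by rw [abs_mul, abs_of_pos hM0]
    rw [le_div_iff₀ hM0, habs, abs_le]
    constructor <;> linarith
  have hloc := local_le a ha_inj x φ N ⌊κ / 24 * N⌋₊ (4 / κ) hφclose
    (fun i k hik h => Nat.le_floor (hrep i k hik h))
  have hCS := card_pairs_le (Finset.Icc 1 N ×ˢ Finset.Icc 1 N)
    (fun p => (a p.1 : ℤ) - a p.2) (fun p => φ p.1) M (fun p _ => hφM _)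
  have hfin : _root_.addEnergy (firstN a N) ≤ M * (N ^ 2 + pairCount x N (4 / κ) * ⌊κ / 24 * N⌋₊) :=
    (addEnergy_le a N).trans (hCS.trans (Nat.mul_le_mul_left _ hloc))
  have hfin' : (_root_.addEnergy (firstN a N) : ℝ)
      ≤ M * (N ^ 2 + pairCount x N (4 / κ) * (⌊κ / 24 * N⌋₊ : ℝ)) := by exact_mod_cast hfin
  have hfl : (⌊κ / 24 * N⌋₊ : ℝ) ≤ κ / 24 * N := Nat.floor_le (by positivity)
  have h4 : (pairCount x N (4 / κ) : ℝ) * (⌊κ / 24 * N⌋₊ : ℝ) ≤ N ^ 2 / 2 := by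
    calc (pairCount x N (4 / κ) : ℝ) * (⌊κ / 24 * N⌋₊ : ℝ)
        ≤ (3 * (4 / κ) * N) * (κ / 24 * N) := by gcongr
      _ = N ^ 2 / 2 := by field_simp; norm_num
  have h5 : (_root_.addEnergy (firstN a N) : ℝ) ≤ (N * κ / 2) * (N ^ 2 + N ^ 2 / 2) :=
    hfin'.trans (by gcongr)
  have h6 : 0 < κ * (N : ℝ) ^ 3 := by positivity
  nlinarith
end

section
/- Let (a_n)_{n∈ℕ} be a strictly increasing sequence of positive integers and let A_N denote the set of its first N elements. Then E(A_N) = Ω(N³) (i.e., there exists κ > 0 such that E(A_N) ≥ κN³ for infinitely many N) if and only if (a_n)_{n∈ℕ} is quasi-arithmetic of some degree d. -/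
/-!
Large additive energy along a sequence is equivalent to being quasi-arithmetic.

If a positive proportion of `A_N` lies in a progression `P` of size `O(N)`, all sums of two elements
of that part lie in `P + P`, which has size `O(N)`; by Cauchy-Schwarz some sums are then represented
so often that the energy is at least a constant times `N ^ 3` (`card_pow_four_le`).

Conversely, a set `A` of `N` integers with energy at least `κ * N ^ 3` has a subset of size at
least `c * N` inside a progression of size at most `K * N`, whose dimension depends on `κ` only
(`weak_freiman`). The proof combines the Balog-Szemerédi-Gowers theorem with Freiman's theorem.

* `bsg` gives a proportional `A₁ ⊆ A` with small difference set, hence by the Plünnecke-Ruzsa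
  inequality all the sets `p A₁ - q A₁` have size `O(N)`.
* `model` (Ruzsa) transports a sixth of `A₁`, called `A₂`, to a set `B` of positive density in a
  cyclic group `ZMod m` by a Freiman isomorphism of order `6`.
* `bogolyubov` shows that `2B - 2B` contains a Bohr set with boundedly many frequencies, and
  `bohr_gap` finds a proper progression of positive density in that Bohr set. The latter is
  geometry of numbers; `lattice_gap` replaces Minkowski's second theorem by an induction that
  projects a lattice along one of its shortest vectors.
* `pull_back` lifts this progression to a proper progression `Q ⊆ 2A₂ - 2A₂` of integers.
* Since `A₂ + Q ⊆ 3A₁ - 2A₁` has size `O(N)`, some reflected translate `s - Q` contains a positive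
  proportion of `A₂` (`exists_translate`). Only a large subset of `A` has to be covered, so this
  pigeonhole argument takes the place of Ruzsa's covering lemma.
-/

open Finset Filter
open scoped Classical

/-- The `d`-dimensional arithmetic progression
`{h + ∑ j r j * k j | 0 ≤ r j < s j}`. -/
def dimAP (d : ℕ) (h : ℤ) (k : Fin d → ℤ) (s : Fin d → ℕ) : Finset ℤ :=
  (Fintype.piFinset fun j => Finset.range (s j)).image
    fun r => h + ∑ j, (r j : ℤ) * k j

/-- A strictly increasing sequence of positive integers is quasi-arithmetic of
degree `d` if there are constants `C, K > 0` and a strictly increasing sequence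
`(N i)` of positive integers such that for every `i` some subset of
`{a 1, …, a (N i)}` of size at least `C * N i` is contained in a
`d`-dimensional arithmetic progression of size at most `K * N i`. -/
def QuasiArithmetic (a : ℕ → ℕ) (d : ℕ) : Prop :=
  ∃ C K : ℝ, 0 < C ∧ 0 < K ∧
    ∃ N : ℕ → ℕ, StrictMono N ∧ (∀ i, 0 < N i) ∧
      ∀ i, ∃ A : Finset ℤ, A ⊆ firstN a (N i) ∧ (C * N i : ℝ) ≤ A.card ∧
        ∃ (h : ℤ) (k : Fin d → ℤ) (s : Fin d → ℕ),
          (∀ j, 0 < s j) ∧ A ⊆ dimAP d h k s ∧ ((∏ j, s j : ℕ) : ℝ) ≤ K * N i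

/-! ### The Balog-Szemerédi-Gowers theorem -/

/-- The combinatorial core of the Balog-Szemerédi-Gowers theorem. A dense bipartite graph between two
copies of `A` has a large set `A'` of vertices any two of which are joined by a positive proportion
of all possible paths `a - b - x - b' - a'` of length four; such a path is encoded as
`(x, (b, b'))`. -/
theorem graph_paths {α : Type*} (A : Finset α) (G : α → α → Prop) (δ : ℝ) (hδ : 0 < δ)
    (hA : A.Nonempty)
    (hG : δ * (A.card : ℝ) ^ 2 ≤ (((A ×ˢ A).filter fun p => G p.1 p.2).card : ℝ)) :
    ∃ A' ⊆ A, δ / 4 * A.card ≤ (A'.card : ℝ) ∧ ∀ a ∈ A', ∀ a' ∈ A',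
      δ / 4 * (δ ^ 2 / 16) ^ 2 * (A.card : ℝ) ^ 3 ≤
        (((A ×ˢ (A ×ˢ A)).filter fun q =>
          (G a q.2.1 ∧ G q.1 q.2.1) ∧ (G a' q.2.2 ∧ G q.1 q.2.2)).card : ℝ) := by
  set N : ℝ := (A.card : ℝ) with hN
  have hN0 : 0 < N := by rw [hN]; exact_mod_cast hA.card_pos
  set η : ℝ := δ ^ 2 / 16 with hη
  -- `nb b` is the neighbourhood of `b`, `cod a a'` the codegree set; a pair is bad if it has few
  -- common neighbours
  set nb : α → Finset α := fun b => A.filter fun a => G a b with hnb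
  set cod : α → α → Finset α := fun a a' => A.filter fun b => G a b ∧ G a' b with hcod
  set bad : α × α → Prop := fun p => ((cod p.1 p.2).card : ℝ) < η * N with hbad
  have h1 : δ * N ^ 2 ≤ ∑ b ∈ A, ((nb b).card : ℝ) := by
    refine hG.trans (le_of_eq ?_)
    rw [card_filter, sum_product_right]
    push_cast
    refine sum_congr rfl fun b _ => ?_
    rw [hnb]; simp only [card_filter]; push_cast; rfl
  have h2 : δ ^ 2 * N ^ 3 ≤ ∑ b ∈ A, ((nb b).card : ℝ) ^ 2 := by
    have := sq_sum_le_card_mul_sum_sq (s := A) (f := fun b => ((nb b).card : ℝ))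
    have h3 : (δ * N ^ 2) ^ 2 ≤ (∑ b ∈ A, ((nb b).card : ℝ)) ^ 2 := by gcongr
    have h4 : N * (δ ^ 2 * N ^ 3) ≤ N * ∑ b ∈ A, ((nb b).card : ℝ) ^ 2 := by
      calc _ = (δ * N ^ 2) ^ 2 := by ring
        _ ≤ _ := h3.trans this
    exact le_of_mul_le_mul_left h4 hN0
  set bd : α → Finset (α × α) := fun b => (nb b ×ˢ nb b).filter bad with hbd
  have h5 : ∑ b ∈ A, ((bd b).card : ℝ) ≤ η * N * N ^ 2 := by
    have e1 : ∑ b ∈ A, (bd b).card = ∑ p ∈ (A ×ˢ A).filter bad, (cod p.1 p.2).card := by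
      have := sum_card_bipartiteAbove_eq_sum_card_bipartiteBelow
        (s := A) (t := (A ×ˢ A).filter bad) (fun b p => G p.1 b ∧ G p.2 b)
      convert this using 1
      · refine sum_congr rfl fun b _ => congrArg card ?_
        ext p
        simp only [hbd, hnb, bipartiteAbove, mem_filter, mem_product]
        tauto
      · refine sum_congr rfl fun p _ => congrArg card ?_
        ext b
        simp only [hcod, bipartiteBelow, mem_filter]
    have e2 : ∑ b ∈ A, ((bd b).card : ℝ)
        = ∑ p ∈ (A ×ˢ A).filter bad, ((cod p.1 p.2).card : ℝ) := by exact_mod_cast e1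
    rw [e2]
    calc _ ≤ ∑ p ∈ (A ×ˢ A).filter bad, η * N :=
          sum_le_sum fun p hp => (mem_filter.1 hp).2.le
      _ = ((A ×ˢ A).filter bad).card * (η * N) := by rw [sum_const, nsmul_eq_mul]
      _ ≤ (A ×ˢ A).card * (η * N) := by
          gcongr
          exact filter_subset _ _
      _ = η * N * N ^ 2 := by rw [card_product]; push_cast; ring
  -- average over `b`: some neighbourhood is large and contains few bad pairs; the value of `η` makes
  -- `8 * η` half of `δ ^ 2`
  obtain ⟨b, hb, hb'⟩ : ∃ b ∈ A, (δ ^ 2 - 8 * η) * N ^ 2 ≤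
      ((nb b).card : ℝ) ^ 2 - 8 * (bd b).card := by
    apply exists_le_of_sum_le hA
    rw [sum_const, nsmul_eq_mul, sum_sub_distrib, ← mul_sum]
    nlinarith
  set S := nb b with hS
  have hSA : S ⊆ A := filter_subset _ _
  have hb2 : δ ^ 2 / 2 * N ^ 2 ≤ (S.card : ℝ) ^ 2 - 8 * (bd b).card := by
    convert hb' using 2
    rw [hη]; ring
  have hS1 : δ / 2 * N ≤ S.card := by
    refine le_of_sq_le_sq ?_ (by positivity)
    have : (0:ℝ) ≤ (bd b).card := by positivity
    nlinarith [sq_nonneg (δ * N)]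
  have hS2 : 8 * ((bd b).card : ℝ) ≤ (S.card : ℝ) ^ 2 := by
    have : 0 ≤ δ ^ 2 / 2 * N ^ 2 := by positivity
    linarith
  have hS0 : (0:ℝ) < S.card := lt_of_lt_of_le (by positivity) hS1
  set bx : α → Finset α := fun a => S.filter fun x => bad (a, x) with hbx
  -- keep the vertices that are in few bad pairs
  set A' := S.filter fun a => ((bx a).card : ℝ) ≤ S.card / 4 with hA'
  have hbdsum : ((bd b).card : ℝ) = ∑ a ∈ S, ((bx a).card : ℝ) := by
    rw [hbd]
    simp only [hbx, card_filter]
    rw [sum_product]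
    push_cast
    rfl
  have hA'1 : (S.card : ℝ) / 2 ≤ A'.card := by
    set T := S.filter fun a => ¬ ((bx a).card : ℝ) ≤ S.card / 4 with hT
    have h6 : (T.card : ℝ) * (S.card / 4) ≤ (bd b).card := by
      have h61 : T.card • ((S.card : ℝ) / 4) ≤ ∑ a ∈ T, ((bx a).card : ℝ) :=
        card_nsmul_le_sum _ _ _ fun a ha => (not_le.1 (mem_filter.1 ha).2).le
      have h62 : ∑ a ∈ T, ((bx a).card : ℝ) ≤ ∑ a ∈ S, ((bx a).card : ℝ) :=
        sum_le_sum_of_subset_of_nonneg (filter_subset _ _) fun _ _ _ => Nat.cast_nonneg _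
      rw [nsmul_eq_mul] at h61
      rw [hbdsum]
      exact h61.trans h62
    have h7 : A'.card + T.card = S.card := card_filter_add_card_filter_not _
    have h8 : (A'.card : ℝ) + T.card = S.card := by exact_mod_cast h7
    have h8' : (T.card : ℝ) = S.card - A'.card := by linarith
    rw [h8'] at h6
    refine le_of_mul_le_mul_right (a := (S.card : ℝ)) ?_ hS0
    linarith
  refine ⟨A', (filter_subset _ _).trans hSA, by linarith, fun a ha a' ha' => ?_⟩
  -- at least half of the `x ∈ S` form a good pair both with `a` and with `a'`
  set X := S.filter fun x => ¬ bad (a, x) ∧ ¬ bad (a', x) with hX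
  have hX1 : δ / 4 * N ≤ X.card := by
    have h9 : S ⊆ X ∪ (bx a ∪ bx a') := by
      intro x hx
      simp only [hX, hbx, mem_union, mem_filter]
      tauto
    have h10 : (S.card : ℝ) ≤ X.card + ((bx a).card + (bx a').card) := by
      exact_mod_cast (card_le_card h9).trans ((card_union_le _ _).trans
        (Nat.add_le_add_left (card_union_le _ _) _))
    have := (mem_filter.1 ha).2
    have := (mem_filter.1 ha').2
    linarith
  have hsub : (X.sigma fun x => cod a x ×ˢ cod a' x).card ≤
      ((A ×ˢ (A ×ˢ A)).filter fun q =>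
          (G a q.2.1 ∧ G q.1 q.2.1) ∧ (G a' q.2.2 ∧ G q.1 q.2.2)).card := by
    refine card_le_card_of_injOn (fun y => (y.1, y.2)) ?_ ?_
    · rintro ⟨x, b1, b2⟩ hy
      simp only [hX, hcod, coe_sigma, Set.mem_sigma_iff, mem_coe, mem_filter, mem_product] at hy ⊢
      exact ⟨⟨hSA hy.1.1, hy.2.1.1, hy.2.2.1⟩, hy.2.1.2, hy.2.2.2⟩
    · rintro ⟨x, b1⟩ _ ⟨x', b1'⟩ _ h
      simp only [Prod.mk.injEq] at h
      obtain ⟨rfl, rfl⟩ := h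
      rfl
  refine le_trans ?_ (Nat.cast_le.2 hsub)
  rw [card_sigma]
  push_cast
  calc δ / 4 * (δ ^ 2 / 16) ^ 2 * N ^ 3 = (δ / 4 * N) * (η * N) ^ 2 := by rw [hη]; ring
    _ ≤ X.card * (η * N) ^ 2 := by gcongr
    _ = X.card • (η * N) ^ 2 := (nsmul_eq_mul _ _).symm
    _ ≤ _ := by
      refine card_nsmul_le_sum _ _ _ fun x hx => ?_
      obtain ⟨_, h11, h12⟩ := mem_filter.1 hx
      simp only [hbad, not_lt] at h11 h12
      rw [card_product, sq]
      push_cast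
      gcongr

open scoped Pointwise in
/-- The **Balog-Szemerédi-Gowers theorem**: a set of integers with large additive energy has a
proportional subset with small difference set. -/
theorem bsg (κ : ℝ) (hκ : 0 < κ) : ∃ c C : ℝ, 0 < c ∧ 0 < C ∧ ∀ A : Finset ℤ, A.Nonempty →
    κ * (A.card : ℝ) ^ 3 ≤ (_root_.addEnergy A : ℝ) →
    ∃ A' ⊆ A, c * A.card ≤ (A'.card : ℝ) ∧ ((A' - A').card : ℝ) ≤ C * A.card := by
  set δ : ℝ := κ / 2 with hδ
  have hδ0 : 0 < δ := by positivity
  set c₀ : ℝ := δ / 4 * (δ ^ 2 / 16) ^ 2 with hc₀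
  have hc₀0 : 0 < c₀ := by positivity
  refine ⟨δ / 4, (2 / κ) ^ 4 / c₀, by positivity, by positivity, fun A hA hE => ?_⟩
  set N : ℝ := (A.card : ℝ) with hN
  have hN0 : 0 < N := by rw [hN]; exact_mod_cast hA.card_pos
  -- `r x` is the set of representations of `x` as a difference; popular differences have many
  set r : ℤ → Finset (ℤ × ℤ) := fun x => (A ×ˢ A).filter fun q => q.1 - q.2 = x with hr
  set pop : ℤ → ℤ → Prop := fun a b => δ * N ≤ (r (a - b)).card with hpop
  set P := (A ×ˢ A).filter fun p => pop p.1 p.2 with hP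
  have hrN : ∀ x, ((r x).card : ℝ) ≤ N := by
    intro x
    have : (r x).card ≤ A.card := by
      refine card_le_card_of_injOn Prod.fst ?_ ?_
      · intro q hq
        simp only [hr, coe_filter, mem_product, Set.mem_ofPred_eq] at hq
        exact hq.1.1
      · rintro ⟨q1, q2⟩ hq ⟨q1', q2'⟩ hq' h
        simp only [hr, coe_filter, mem_product, Set.mem_ofPred_eq] at hq hq' h
        ext <;> simp <;> omega
    rw [hN]
    exact_mod_cast this
  have hEsum : (_root_.addEnergy A : ℝ) = ∑ p ∈ A ×ˢ A, ((r (p.1 - p.2)).card : ℝ) := by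
    have : _root_.addEnergy A = ∑ p ∈ A ×ˢ A, (r (p.1 - p.2)).card := by
      rw [← card_sigma]
      refine card_bij' (fun q _ => ⟨(q.1.1, q.2.1), (q.2.2, q.1.2)⟩)
        (fun s _ => ((s.1.1, s.2.2), (s.1.2, s.2.1))) ?_ ?_ ?_ ?_
      · rintro ⟨⟨a, b⟩, c, d⟩ h
        simp only [mem_filter, mem_product, hr, mem_sigma] at h ⊢
        refine ⟨⟨h.1.1.1, h.1.2.1⟩, ⟨h.1.2.2, h.1.1.2⟩, by linarith [h.2]⟩
      · rintro ⟨⟨a, b⟩, c, d⟩ h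
        simp only [mem_filter, mem_product, hr, mem_sigma] at h ⊢
        refine ⟨⟨⟨h.1.1, h.2.1.2⟩, ⟨h.1.2, h.2.1.1⟩⟩, by linarith [h.2.2]⟩
      · intros; rfl
      · intros; rfl
    exact_mod_cast this
  have hPcard : δ * N ^ 2 ≤ (P.card : ℝ) := by
    have h1 : ∀ p ∈ A ×ˢ A, ((r (p.1 - p.2)).card : ℝ) ≤
        δ * N + N * (if pop p.1 p.2 then 1 else 0) := by
      intro p _
      split_ifs with h
      · have := hrN (p.1 - p.2)
        have : 0 ≤ δ * N := by positivity
        linarith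
      · simp only [hpop, not_le] at h
        linarith
    have h2 := sum_le_sum h1
    rw [← hEsum, sum_add_distrib, sum_const, ← mul_sum, card_product, nsmul_eq_mul, sum_boole] at h2
    push_cast at h2
    have h3 : κ * N ^ 3 ≤ N * N * (δ * N) + N * P.card := hE.trans h2
    have h4 : N * (δ * N ^ 2) ≤ N * P.card := by
      have : κ = 2 * δ := by rw [hδ]; ring
      rw [this] at h3
      linarith
    exact le_of_mul_le_mul_left h4 hN0
  set D := P.image fun p => p.1 - p.2 with hD
  have hDcard : (D.card : ℝ) ≤ 2 / κ * N := by
    have h1 : ∑ x ∈ D, (r x).card ≤ (A ×ˢ A).card :=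
      (sum_card_fiberwise_eq_card_filter (A ×ˢ A) D fun q => q.1 - q.2).le.trans
        (card_filter_le _ _)
    have h2 : D.card • (δ * N) ≤ ∑ x ∈ D, ((r x).card : ℝ) := by
      refine card_nsmul_le_sum _ _ _ fun x hx => ?_
      obtain ⟨p, hp, rfl⟩ := mem_image.1 hx
      exact (mem_filter.1 hp).2
    have h3 : (∑ x ∈ D, ((r x).card : ℝ)) ≤ N * N := by
      rw [card_product] at h1
      rw [hN]
      exact_mod_cast h1
    rw [nsmul_eq_mul] at h2
    have h4 : (D.card * δ) * N ≤ N * N := by linarith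
    have h5 := le_of_mul_le_mul_right h4 hN0
    rw [hδ] at h5
    rw [div_mul_eq_mul_div, le_div_iff₀ hκ]
    linarith
  obtain ⟨A', hA'A, hA'c, hpath⟩ := graph_paths A pop δ hδ0 hA hPcard
  refine ⟨A', hA'A, hA'c, ?_⟩
  have hmemD : ∀ a ∈ A, ∀ b ∈ A, pop a b → a - b ∈ D := fun a ha b hb h =>
    mem_image.2 ⟨(a, b), mem_filter.2 ⟨mem_product.2 ⟨ha, hb⟩, h⟩, rfl⟩
  set D4 := (D ×ˢ D) ×ˢ (D ×ˢ D) with hD4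
  -- each `y = a - a'` is `(a - b) - (x - b) + ((x - b') - (a' - b'))` along the paths from `a` to `a'`,
  -- so it is represented many times by popular differences
  have hfib : ∀ y ∈ A' - A', c₀ * N ^ 3 ≤
      ((D4.filter fun q => q.1.1 - q.1.2 + (q.2.1 - q.2.2) = y).card : ℝ) := by
    intro y hy
    obtain ⟨a, ha, a', ha', rfl⟩ := mem_sub.1 hy
    refine (hpath a ha a' ha').trans (Nat.cast_le.2 ?_)
    refine card_le_card_of_injOn
      (fun q => ((a - q.2.1, q.1 - q.2.1), (q.1 - q.2.2, a' - q.2.2))) ?_ ?_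
    · rintro ⟨x, b, b'⟩ h
      simp only [coe_filter, mem_product, Set.mem_ofPred_eq, hD4] at h ⊢
      obtain ⟨⟨hx, hb, hb'⟩, ⟨h1, h2⟩, h3, h4⟩ := h
      exact ⟨⟨⟨hmemD _ (hA'A ha) _ hb h1, hmemD _ hx _ hb h2⟩, hmemD _ hx _ hb' h4,
        hmemD _ (hA'A ha') _ hb' h3⟩, by ring⟩
    · rintro ⟨x, b, b'⟩ _ ⟨x1, b1, b1'⟩ _ h
      simp only [Prod.mk.injEq] at h ⊢
      omega
  have h6 : (A' - A').card • (c₀ * N ^ 3) ≤ (D.card : ℝ) ^ 4 := by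
    refine (card_nsmul_le_sum _ _ _ hfib).trans ?_
    have h7 := (sum_card_fiberwise_eq_card_filter D4 (A' - A')
      fun q => q.1.1 - q.1.2 + (q.2.1 - q.2.2)).le.trans (card_filter_le _ _)
    have h8 : D4.card = D.card ^ 4 := by simp only [hD4, card_product]; ring
    rw [h8] at h7
    exact_mod_cast h7
  have h9 : (D.card : ℝ) ^ 4 ≤ (2 / κ * N) ^ 4 := by gcongr
  rw [nsmul_eq_mul] at h6
  rw [div_mul_eq_mul_div, le_div_iff₀ hc₀0]
  refine le_of_mul_le_mul_right (a := N ^ 3) ?_ (by positivity)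
  calc _ = ((A' - A').card : ℝ) * (c₀ * N ^ 3) := by ring
    _ ≤ (2 / κ * N) ^ 4 := h6.trans h9
    _ = _ := by ring

/-! ### Modelling a set of integers in a cyclic group -/

/-- **Ruzsa's modelling lemma** of order six. If `6A - 6A` is contained in `T`, a sixth of `A` is
Freiman isomorphic of order six to a subset of `ZMod m` as soon as `m > 2 * #T`. The map reduces
modulo a large prime `p`, dilates by a suitable `l`, lifts to `[0, p)` and reduces modulo `m`. -/
theorem model (A T : Finset ℤ) (hT : ∀ a b : Fin 6 → ℤ, (∀ i, a i ∈ A) → (∀ i, b i ∈ A) →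
      ∑ i, a i - ∑ i, b i ∈ T) (m : ℕ) (hm : 2 * T.card < m) :
    ∃ A' ⊆ A, A.card ≤ 6 * A'.card ∧ ∃ φ : ℤ → ZMod m, ∀ a b : Fin 6 → ℤ,
      (∀ i, a i ∈ A') → (∀ i, b i ∈ A') →
        (∑ i, φ (a i) = ∑ i, φ (b i) ↔ ∑ i, a i = ∑ i, b i) := by
  obtain ⟨p, hpT, hp⟩ := Nat.exists_infinite_primes ((T.sup Int.natAbs) + 1)
  have : Fact p.Prime := ⟨hp⟩
  have hp0 : (0 : ℤ) < p := by exact_mod_cast hp.pos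
  have hTp : ∀ x ∈ T, x ≠ 0 → (x : ZMod p) ≠ 0 := by
    intro x hx hx0 h
    rw [ZMod.intCast_zmod_eq_zero_iff_dvd] at h
    have h1 := Int.natAbs_le_of_dvd_ne_zero h hx0
    have h2 : x.natAbs ≤ T.sup Int.natAbs := le_sup (f := Int.natAbs) hx
    simp at h1
    omega
  -- a dilation is bad if it sends some nonzero `x ∈ T` to a nonzero multiple `m * s` of `m` with
  -- `|m * s| < p`
  set q : ℕ := (p - 1) / m with hq
  set bad : Finset (ZMod p) := (T ×ˢ (Finset.Icc (-(q : ℤ)) q).erase 0).image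
    fun y => ((m : ZMod p) * (y.2 : ZMod p)) / (y.1 : ZMod p) with hbad
  have hbadcard : bad.card < p - 1 := by
    have h1 : bad.card ≤ T.card * (2 * q) := by
      refine card_image_le.trans ?_
      rw [card_product, card_erase_of_mem (by simp)]
      refine Nat.mul_le_mul_left _ ?_
      simp
      omega
    have h2 : q * m ≤ p - 1 := Nat.div_mul_le_self _ _
    have h3 := hp.two_le
    rcases Nat.eq_zero_or_pos q with h | h
    · rw [h] at h1; omega
    · nlinarith
  obtain ⟨l, hl0, hlbad⟩ : ∃ l : ZMod p, l ≠ 0 ∧ l ∉ bad := by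
    by_contra! h
    have h1 : (Finset.univ : Finset (ZMod p)).erase 0 ⊆ bad := fun x hx =>
      h x (ne_of_mem_erase hx)
    have h2 := card_le_card h1
    rw [card_erase_of_mem (mem_univ _), card_univ, ZMod.card] at h2
    omega
  set f : ℤ → ℕ := fun x => (l * (x : ZMod p)).val with hf
  have hfp : ∀ x, f x < p := fun x => ZMod.val_lt _
  have hfc : ∀ x, ((f x : ℤ) : ZMod p) = l * x := fun x => by simp [hf]
  -- restrict to a popular cell of width `p / 6`, so that a difference of two sums of six lifts has
  -- absolute value less than `p`
  obtain ⟨j, -, hj⟩ : ∃ j ∈ Finset.range 6,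
      A.card ≤ 6 * (A.filter fun x => 6 * f x / p = j).card := by
    by_contra! h
    have h1 : A.card = ∑ j ∈ Finset.range 6, (A.filter fun x => 6 * f x / p = j).card := by
      refine card_eq_sum_card_fiberwise fun x _ => ?_
      simp only [coe_range, Set.mem_Iio]
      have := hfp x
      rw [Nat.div_lt_iff_lt_mul hp.pos]
      omega
    have h2 := sum_lt_sum_of_nonempty (s := Finset.range 6) (by simp) h
    rw [← mul_sum, ← h1, sum_const, card_range, smul_eq_mul] at h2
    omega
  refine ⟨_, filter_subset _ _, hj, fun x => (f x : ZMod m), fun a b ha hb => ?_⟩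
  set t : ℤ := ∑ i, (f (a i) : ℤ) - ∑ i, (f (b i) : ℤ) with ht
  have htp : (t : ZMod p) = l * ((∑ i, a i - ∑ i, b i : ℤ) : ZMod p) := by
    rw [ht, Int.cast_sub, Int.cast_sum, Int.cast_sum]
    simp only [hfc]
    push_cast
    rw [mul_sub, mul_sum, mul_sum]
  have htm : (t : ZMod m) = ∑ i, (f (a i) : ZMod m) - ∑ i, (f (b i) : ZMod m) := by
    rw [ht]; push_cast; rfl
  have htlt : |t| < p := by
    have h1 : ∀ i, |(f (a i) : ℤ) - f (b i)| * 6 < p := by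
      intro i
      have h2 := (mem_filter.1 (ha i)).2
      have h3 := (mem_filter.1 (hb i)).2
      rw [Nat.div_eq_iff hp.pos] at h2 h3
      have : |(f (a i) : ℤ) - f (b i)| * 6 = |6 * (f (a i) : ℤ) - 6 * f (b i)| := by
        rw [← mul_sub, abs_mul, mul_comm]; rfl
      rw [this, abs_lt]
      have := hp.pos
      zify at h2 h3
      constructor <;> omega
    have h2 : |t| ≤ ∑ i, |(f (a i) : ℤ) - f (b i)| := by
      rw [ht, ← sum_sub_distrib]
      exact abs_sum_le_sum_abs _ _
    have h3 : ∑ i : Fin 6, |(f (a i) : ℤ) - f (b i)| * 6 < ∑ i : Fin 6, (p : ℤ) :=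
      sum_lt_sum_of_nonempty (by simp) fun i _ => h1 i
    rw [← sum_mul] at h3
    simp at h3
    linarith
  rw [← sub_eq_zero, ← htm, ← sub_eq_zero (a := ∑ i, a i)]
  constructor
  · intro h
    by_contra hx
    have hxT := hT a b (fun i => (mem_filter.1 (ha i)).1) fun i => (mem_filter.1 (hb i)).1
    set x : ℤ := ∑ i, a i - ∑ i, b i with hxdef
    have hxp := hTp x hxT hx
    rw [ZMod.intCast_zmod_eq_zero_iff_dvd] at h
    obtain ⟨s, hs⟩ := h
    refine hlbad (mem_image.2 ⟨(x, s), mem_product.2 ⟨hxT, mem_erase.2 ⟨?_, ?_⟩⟩, ?_⟩)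
    · rintro rfl
      rw [hs] at htp
      simp at htp
      exact htp.elim hl0 hxp
    · have h4 : s.natAbs ≤ q := by
        rw [hq, Nat.le_div_iff_mul_le (by omega)]
        have h5 : t.natAbs < p := by
          rw [Int.abs_eq_natAbs] at htlt
          exact_mod_cast htlt
        rw [hs, Int.natAbs_mul] at h5
        simp at h5
        rw [mul_comm]
        omega
      simp
      omega
    · rw [div_eq_iff hxp, ← htp, hs]
      push_cast
      rfl
  · intro h
    rw [h] at htp
    simp at htp
    rw [ZMod.intCast_zmod_eq_zero_iff_dvd] at htp
    rw [Int.eq_zero_of_abs_lt_dvd htp htlt]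
    simp

/-! ### Bogolyubov's lemma -/

/-- **Bogolyubov's lemma**. The frequencies in `Γ` are the large Fourier coefficients of `B`; the
condition on `x` says that each `r * x / m` is within `1 / 4` of an integer. -/
theorem bogolyubov (m : ℕ) [NeZero m] (B : Finset (ZMod m)) (hB : B.Nonempty) :
    ∃ Γ : Finset (ZMod m), (Γ.card : ℝ) * (B.card : ℝ) ^ 2 ≤ (m : ℝ) ^ 2 ∧
      ∀ x : ZMod m, (∀ r ∈ Γ, 0 ≤ (ZMod.stdAddChar (r * x)).re) →
        ∃ b₁ ∈ B, ∃ b₂ ∈ B, ∃ b₃ ∈ B, ∃ b₄ ∈ B, x = b₁ - b₂ + (b₃ - b₄) := by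
  have hm0 : (0 : ℝ) < m := by exact_mod_cast Nat.pos_of_neZero m
  set β : ℝ := (B.card : ℝ) with hβ
  have hβ0 : 0 < β := by rw [hβ]; exact_mod_cast hB.card_pos
  set e : AddChar (ZMod m) ℂ := ZMod.stdAddChar with he
  have orth : ∀ b : ZMod m, ∑ r, e (r * b) = if b = 0 then (m : ℂ) else 0 := by
    intro b
    rw [AddChar.sum_mulShift b (ZMod.isPrimitive_stdAddChar m), ZMod.card]
    push_cast
    rfl
  set F : ZMod m → ℂ := fun r => ∑ b ∈ B, e (r * b) with hF
  have hsq : ∀ r, ((‖F r‖ ^ 2 : ℝ) : ℂ) = ∑ p ∈ B ×ˢ B, e (r * (p.1 - p.2)) := by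
    intro r
    push_cast
    rw [← Complex.mul_conj', hF]
    simp only [map_sum]
    rw [sum_mul_sum, sum_product]
    refine sum_congr rfl fun b _ => sum_congr rfl fun b' _ => ?_
    rw [← AddChar.map_neg_eq_conj, ← AddChar.map_add_eq_mul]
    congr 1
    ring
  have parseval : ∑ r, ‖F r‖ ^ 2 = m * β := by
    have : ((∑ r, ‖F r‖ ^ 2 : ℝ) : ℂ) = ((m * β : ℝ) : ℂ) := by
      rw [Complex.ofReal_sum, sum_congr rfl fun r _ => hsq r, sum_comm]
      simp only [orth, sub_eq_zero]
      rw [sum_product]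
      simp only [sum_ite_eq]
      rw [sum_congr rfl fun b hb => if_pos hb, sum_const, nsmul_eq_mul]
      rw [hβ]
      push_cast
      ring
    exact_mod_cast this
  have hF0 : ‖F 0‖ = β := by simp [hF, hβ]
  set Γ : Finset (ZMod m) := Finset.univ.filter fun r => β ^ 3 / m ≤ ‖F r‖ ^ 2 with hΓ
  have hβm : β ≤ m := by
    have := card_le_univ B
    rw [ZMod.card] at this
    rw [hβ]
    exact_mod_cast this
  have h0Γ : (0 : ZMod m) ∈ Γ := by
    simp only [hΓ, mem_filter, mem_univ, true_and, hF0]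
    rw [div_le_iff₀ hm0, pow_succ]
    gcongr
  refine ⟨Γ, ?_, fun x hx => ?_⟩
  · have h1 : Γ.card • (β ^ 3 / m) ≤ ∑ r ∈ Γ, ‖F r‖ ^ 2 :=
      card_nsmul_le_sum _ _ _ fun r hr => (mem_filter.1 hr).2
    have h2 : ∑ r ∈ Γ, ‖F r‖ ^ 2 ≤ m * β := by
      rw [← parseval]
      exact sum_le_sum_of_subset_of_nonneg (subset_univ _) fun _ _ _ => by positivity
    rw [nsmul_eq_mul] at h1
    have h3 := h1.trans h2
    rw [← mul_div_assoc, div_le_iff₀ hm0] at h3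
    refine le_of_mul_le_mul_right (a := β) ?_ hβ0
    linarith
  · by_contra hcon
    push Not at hcon
    -- up to a factor `m`, the left-hand side counts the representations of `x` in `2B - 2B`
    have hzero : ∑ r, (((‖F r‖ ^ 2) ^ 2 : ℝ) : ℂ) * e (-(r * x)) = 0 := by
      have h1 : ∀ r, (((‖F r‖ ^ 2) ^ 2 : ℝ) : ℂ) * e (-(r * x)) =
          ∑ q ∈ (B ×ˢ B) ×ˢ (B ×ˢ B), e (r * (q.1.1 - q.1.2 + (q.2.1 - q.2.2) - x)) := by
        intro r
        rw [Complex.ofReal_pow, hsq, sq, sum_mul_sum, sum_product (s := B ×ˢ B), sum_mul]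
        refine sum_congr rfl fun b _ => ?_
        rw [sum_mul]
        refine sum_congr rfl fun b' _ => ?_
        rw [← AddChar.map_add_eq_mul, ← AddChar.map_add_eq_mul]
        congr 1
        ring
      rw [sum_congr rfl fun r _ => h1 r, sum_comm]
      refine sum_eq_zero fun q hq => ?_
      rw [orth, if_neg]
      simp only [mem_product] at hq
      intro h
      exact hcon _ hq.1.1 _ hq.1.2 _ hq.2.1 _ hq.2.2 (sub_eq_zero.1 h).symm
    have hre : ∑ r, (‖F r‖ ^ 2) ^ 2 * (e (r * x)).re = 0 := by
      have h1 := congrArg Complex.re hzero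
      rw [Complex.re_sum] at h1
      rw [← Complex.zero_re, ← h1]
      refine sum_congr rfl fun r _ => ?_
      rw [Complex.re_ofReal_mul, AddChar.map_neg_eq_conj, Complex.conj_re]
    -- the frequencies in `Γ` contribute at least `|B| ^ 4`, the others more than `-|B| ^ 4`
    rw [← sum_add_sum_compl Γ] at hre
    have hbig : β ^ 4 ≤ ∑ r ∈ Γ, (‖F r‖ ^ 2) ^ 2 * (e (r * x)).re := by
      have h1 := single_le_sum (f := fun r => (‖F r‖ ^ 2) ^ 2 * (e (r * x)).re)
        (fun r hr => mul_nonneg (by positivity) (hx r hr)) h0Γ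
      refine le_trans (le_of_eq ?_) h1
      simp [hF0]
      ring
    have hsmall : -(β ^ 3 / m * (m * β - β ^ 2)) ≤
        ∑ r ∈ Γᶜ, (‖F r‖ ^ 2) ^ 2 * (e (r * x)).re := by
      have h1 : ∑ r ∈ Γᶜ, ‖F r‖ ^ 2 ≤ m * β - β ^ 2 := by
        have h2 := sum_add_sum_compl Γ fun r => ‖F r‖ ^ 2
        have h3 := single_le_sum (f := fun r => ‖F r‖ ^ 2) (fun r _ => by positivity) h0Γ
        simp only [hF0] at h3
        rw [parseval] at h2
        linarith
      calc _ ≤ -(β ^ 3 / m * ∑ r ∈ Γᶜ, ‖F r‖ ^ 2) := by gcongr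
        _ = ∑ r ∈ Γᶜ, -(β ^ 3 / m * ‖F r‖ ^ 2) := by rw [mul_sum, sum_neg_distrib]
        _ ≤ _ := by
          refine sum_le_sum fun r hr => ?_
          have h4 : ‖F r‖ ^ 2 ≤ β ^ 3 / m := by
            simp only [hΓ, mem_compl, mem_filter, mem_univ, true_and, not_le] at hr
            exact hr.le
          have h5 : -1 ≤ (e (r * x)).re := by
            have := Complex.abs_re_le_norm (e (r * x))
            rw [AddChar.norm_apply] at this
            exact (abs_le.1 this).1
          have h6 : 0 ≤ ‖F r‖ ^ 2 := by positivity
          nlinarith [mul_le_mul_of_nonneg_right h4 h6, mul_nonneg (sq_nonneg (‖F r‖ ^ 2))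
            (by linarith : 0 ≤ (e (r * x)).re + 1)]
    have hfin : β ^ 3 / m * (m * β - β ^ 2) = β ^ 4 - β ^ 5 / m := by
      field_simp
    have : 0 < β ^ 5 / m := by positivity
    linarith

/-! ### Geometry of numbers and Bohr sets -/

open scoped RealInnerProductSpace in
/-- A ball in a discrete group `Λ` of rank at most `n` is comparable in size to a proper
`n`-dimensional progression that it contains; the bound `∑ i, L i * ‖v i‖ ≤ R` ensures that the
progression stays in the ball. Coordinates that are not needed have length `L i = 0`. By induction:
project along a shortest nonzero vector `b`, apply the statement to the image, and lift the resulting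
basis vectors with at most twice their length. -/
theorem lattice_gap {V : Type*} [NormedAddCommGroup V] [InnerProductSpace ℝ V]
    [FiniteDimensional ℝ V] (n : ℕ) :
    ∃ C : ℝ, 0 < C ∧ ∀ (Λ : AddSubgroup V) (W : Submodule ℝ V), Module.finrank ℝ W ≤ n →
      (∀ x ∈ Λ, x ∈ W) → (∀ R : ℝ, {x | x ∈ Λ ∧ ‖x‖ ≤ R}.Finite) → ∀ R : ℝ, 0 ≤ R →
      ∃ (v : Fin n → V) (L : Fin n → ℕ), (∀ i, v i ∈ Λ) ∧ ∑ i, (L i : ℝ) * ‖v i‖ ≤ R ∧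
        (∀ k k' : Fin n → ℕ, (∀ i, k i ≤ L i) → (∀ i, k' i ≤ L i) →
          ∑ i, k i • v i = ∑ i, k' i • v i → k = k') ∧
        ({x | x ∈ Λ ∧ ‖x‖ ≤ R}.ncard : ℝ) ≤ C * ∏ i, ((L i : ℝ) + 1) := by
  induction n with
  | zero =>
    refine ⟨1, one_pos, fun Λ W hW hΛW _ R hR => ⟨Fin.elim0, Fin.elim0, fun i => i.elim0,
      by simpa using hR, fun k k' _ _ _ => Subsingleton.elim _ _, ?_⟩⟩
    have hW0 : W = ⊥ := Submodule.finrank_eq_zero.1 (Nat.le_zero.1 hW)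
    have hsub : {x | x ∈ Λ ∧ ‖x‖ ≤ R} ⊆ {0} := by
      rintro x ⟨hx, -⟩
      have := hΛW x hx
      rw [hW0] at this
      simpa using this
    have := Set.ncard_le_ncard hsub
    rw [Set.ncard_singleton] at this
    simpa using this
  | succ n ih =>
    obtain ⟨C, hC, ih⟩ := ih
    refine ⟨1 + 5 * 4 ^ n * C, by positivity, fun Λ W hW hΛW hfin R hR => ?_⟩
    by_cases hne : ∃ x ∈ Λ, x ≠ 0 ∧ ‖x‖ ≤ R
    swap
    · refine ⟨fun _ => 0, fun _ => 0, fun _ => Λ.zero_mem, by simpa using hR, ?_, ?_⟩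
      · intro k k' hk hk' _
        funext i
        rw [Nat.le_zero.1 (hk i), Nat.le_zero.1 (hk' i)]
      · have hsub : {x | x ∈ Λ ∧ ‖x‖ ≤ R} ⊆ {0} := by
          rintro x ⟨hx, hx'⟩
          by_contra h
          exact hne ⟨x, hx, h, hx'⟩
        have h1 := Set.ncard_le_ncard hsub
        rw [Set.ncard_singleton] at h1
        have h2 : (({x | x ∈ Λ ∧ ‖x‖ ≤ R}.ncard : ℕ) : ℝ) ≤ 1 := by exact_mod_cast h1
        have h3 : 0 < 5 * 4 ^ n * C := by positivity
        simp only [Nat.cast_zero, zero_add, prod_const_one, mul_one]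
        linarith
    -- a shortest nonzero vector `b`
    obtain ⟨b, ⟨hbΛ, hb0, hbR⟩, hbmin⟩ : ∃ b, (b ∈ Λ ∧ b ≠ 0 ∧ ‖b‖ ≤ R) ∧
        ∀ y ∈ Λ, y ≠ 0 → ‖b‖ ≤ ‖y‖ := by
      have hS : {x | x ∈ Λ ∧ x ≠ 0 ∧ ‖x‖ ≤ R}.Finite :=
        (hfin R).subset fun x hx => ⟨hx.1, hx.2.2⟩
      obtain ⟨b, hb, hbm⟩ := Set.exists_min_image _ (fun x : V => ‖x‖) hS hne
      refine ⟨b, hb, fun y hy hy0 => ?_⟩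
      rcases le_or_gt ‖y‖ R with h | h
      · exact hbm y ⟨hy, hy0, h⟩
      · exact hb.2.2.trans h.le
    have hbpos : 0 < ‖b‖ := norm_pos_iff.2 hb0
    have hbb : ⟪b, b⟫ = ‖b‖ ^ 2 := real_inner_self_eq_norm_sq b
    -- projection along `b`
    set c : V → ℝ := fun x => ⟪b, x⟫ / ‖b‖ ^ 2 with hc
    let π : V →ₗ[ℝ] V :=
      { toFun := fun x => x - c x • b
        map_add' := fun x y => by simp only [hc, inner_add_right]; rw [add_div]; module
        map_smul' := fun t x => by
          simp only [hc, inner_smul_right, RingHom.id_apply]; rw [mul_div_assoc]; module }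
    have hπ : ∀ x, π x = x - c x • b := fun x => rfl
    have hπb : π b = 0 := by
      rw [hπ, hc]; simp only [hbb]; rw [div_self (by positivity), one_smul, sub_self]
    have horth : ∀ x, ⟪b, π x⟫ = 0 := by
      intro x
      rw [hπ, inner_sub_right, inner_smul_right, hbb, hc]
      field_simp
      ring
    have hpyth : ∀ x (t : ℝ), ‖π x + t • b‖ ^ 2 = ‖π x‖ ^ 2 + t ^ 2 * ‖b‖ ^ 2 := by
      intro x t
      rw [norm_add_sq_real, inner_smul_right, real_inner_comm, horth, norm_smul]
      rw [mul_pow, Real.norm_eq_abs, sq_abs]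
      ring
    have hπle : ∀ x, ‖π x‖ ≤ ‖x‖ := by
      intro x
      refine le_of_sq_le_sq ?_ (norm_nonneg _)
      have h1 := hpyth x (c x)
      rw [hπ, sub_add_cancel, ← hπ] at h1
      rw [h1]
      have : 0 ≤ (c x) ^ 2 * ‖b‖ ^ 2 := by positivity
      linarith
    -- short lifts: subtract the nearest multiple of `b`; the `b`-component that remains is at most
    -- `‖b‖ / 2`, half the length of the lift
    have hlift : ∀ y ∈ Λ.map π.toAddMonoidHom, ∃ x ∈ Λ, π x = y ∧ ‖x‖ ≤ 2 * ‖y‖ := by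
      rintro _ ⟨x, hx, rfl⟩
      change ∃ x' ∈ Λ, π x' = π x ∧ ‖x'‖ ≤ 2 * ‖π x‖
      by_cases h0 : π x = 0
      · exact ⟨0, Λ.zero_mem, by rw [h0, map_zero], by simp⟩
      set y : V := x - round (c x) • b with hy
      have hyΛ : y ∈ Λ := Λ.sub_mem hx (Λ.zsmul_mem hbΛ _)
      have hπy : π y = π x := by rw [hy, map_sub, map_zsmul, hπb, smul_zero, sub_zero]
      have hy0 : y ≠ 0 := by
        intro h
        rw [h, map_zero] at hπy
        exact h0 hπy.symm
      refine ⟨y, hyΛ, hπy, le_of_sq_le_sq ?_ (by positivity)⟩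
      have h1 : y = π x + (c x - round (c x)) • b := by
        rw [hy, hπ, ← Int.cast_smul_eq_zsmul ℝ]; module
      have h2 := hpyth x (c x - round (c x))
      rw [← h1] at h2
      have h3 : (c x - round (c x)) ^ 2 ≤ 1 / 4 := by
        have := abs_sub_round (c x)
        rw [← sq_abs]
        nlinarith [abs_nonneg (c x - round (c x))]
      have h4 : ‖b‖ ^ 2 ≤ ‖y‖ ^ 2 := by
        have := hbmin y hyΛ hy0
        gcongr
      nlinarith [mul_le_mul_of_nonneg_right h3 (sq_nonneg ‖b‖)]
    have hfin' : ∀ R : ℝ, {x | x ∈ Λ.map π.toAddMonoidHom ∧ ‖x‖ ≤ R}.Finite := by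
      intro R
      refine ((hfin (2 * R)).image π).subset ?_
      rintro y ⟨hy, hyR⟩
      obtain ⟨x, hx, rfl, hxy⟩ := hlift y hy
      exact ⟨x, ⟨hx, by linarith⟩, rfl⟩
    obtain ⟨v', L', hv', hL', hinj', hcard'⟩ := ih (Λ.map π.toAddMonoidHom) (W.map π) (by
        have hlt : W.map π < W := by
          refine lt_of_le_of_ne ?_ fun h => ?_
          · rintro _ ⟨x, hx, rfl⟩
            exact W.sub_mem hx (W.smul_mem _ (hΛW b hbΛ))
          · have h1 := hΛW b hbΛ
            rw [← h] at h1
            obtain ⟨x, -, hx⟩ := h1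
            have h2 := horth x
            rw [hx, hbb] at h2
            exact hbpos.ne' (by simpa using h2)
        have := Submodule.finrank_lt_finrank_of_lt hlt
        omega) (by
        rintro _ ⟨x, hx, rfl⟩
        exact ⟨x, hΛW x hx, rfl⟩) hfin' R hR
    choose w hwΛ hπw hwn using fun i => hlift (v' i) (hv' i)
    set L₀ : ℕ := ⌊R / (2 * ‖b‖)⌋₊ with hL₀
    have hL₀le : (L₀ : ℝ) * ‖b‖ ≤ R / 2 := by
      have h1 : (L₀ : ℝ) ≤ R / (2 * ‖b‖) := Nat.floor_le (by positivity)
      rw [le_div_iff₀ (by positivity)] at h1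
      linarith
    have hL₀lt : R / ‖b‖ < 2 * ((L₀ : ℝ) + 1) := by
      have h1 : R / (2 * ‖b‖) < L₀ + 1 := Nat.lt_floor_add_one _
      rw [div_lt_iff₀ (by positivity)] at h1 ⊢
      linarith
    -- the lengths `L' i` are divided by `4`: by `2` since the lifts may be twice as long, and by `2` to
    -- leave half of the radius for `b`
    refine ⟨Fin.cons b w, Fin.cons L₀ fun i => L' i / 4, ?_, ?_, ?_, ?_⟩
    · intro i
      refine Fin.cases ?_ (fun i => ?_) i
      · simpa using hbΛ
      · simpa using hwΛ i
    · rw [Fin.sum_univ_succ]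
      simp only [Fin.cons_zero, Fin.cons_succ]
      have h1 : ∑ i, ((L' i / 4 : ℕ) : ℝ) * ‖w i‖ ≤ ∑ i, (1 / 2) * ((L' i : ℝ) * ‖v' i‖) := by
        refine sum_le_sum fun i _ => ?_
        have h2 : ((L' i / 4 : ℕ) : ℝ) ≤ L' i / 4 := by
          exact_mod_cast Nat.cast_div_le (m := L' i) (n := 4) (α := ℝ)
        calc _ ≤ ((L' i : ℝ) / 4) * (2 * ‖v' i‖) := by
              gcongr
              exact hwn i
          _ = _ := by ring
      rw [← mul_sum] at h1
      linarith
    · intro k k' hk hk' h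
      rw [Fin.sum_univ_succ, Fin.sum_univ_succ] at h
      simp only [Fin.cons_zero, Fin.cons_succ] at h
      have h1 := congrArg π h
      simp only [map_add, map_sum, map_nsmul, hπb, hπw, smul_zero, zero_add] at h1
      have hle : ∀ (k : Fin (n + 1) → ℕ),
          (∀ i, k i ≤ (Fin.cons L₀ (fun i => L' i / 4) : Fin (n + 1) → ℕ) i) →
          ∀ i : Fin n, k i.succ ≤ L' i := by
        intro k hk i
        have := hk i.succ
        simp only [Fin.cons_succ] at this
        omega
      have h2 := hinj' (fun i => k i.succ) (fun i => k' i.succ) (hle k hk) (hle k' hk') h1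
      have h3 : ∀ i : Fin n, k i.succ = k' i.succ := fun i => congrFun h2 i
      simp only [h3, add_left_inj] at h
      rw [← Nat.cast_smul_eq_nsmul ℝ, ← Nat.cast_smul_eq_nsmul ℝ] at h
      have h4 : k 0 = k' 0 := by exact_mod_cast smul_left_injective ℝ hb0 h
      funext i
      exact Fin.cases h4 h3 i
    · -- two points with the same projection and the same `⌊c x⌋` differ by less than `b`, so agree
      have hcount : {x | x ∈ Λ ∧ ‖x‖ ≤ R}.ncard ≤
          ({x | x ∈ Λ.map π.toAddMonoidHom ∧ ‖x‖ ≤ R} ×ˢ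
            (Set.Icc (-(2 * ((L₀ : ℤ) + 1))) (2 * ((L₀ : ℤ) + 1)))).ncard := by
        refine Set.ncard_le_ncard_of_injOn (fun x => (π x, ⌊c x⌋)) ?_ ?_
          ((hfin' R).prod (Set.finite_Icc _ _))
        · rintro x ⟨hx, hxR⟩
          refine ⟨⟨⟨x, hx, rfl⟩, (hπle x).trans hxR⟩, ?_⟩
          have h1 : |c x| ≤ R / ‖b‖ := by
            rw [hc, abs_div, abs_of_pos (by positivity : 0 < ‖b‖ ^ 2)]
            rw [div_le_div_iff₀ (by positivity) hbpos]
            have h2 := abs_real_inner_le_norm b x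
            nlinarith
          have h2 := abs_lt.1 (h1.trans_lt hL₀lt)
          constructor
          · rw [Int.le_floor]
            push_cast
            linarith
          · have h3 := Int.floor_le (c x)
            have h4 : ((⌊c x⌋ : ℤ) : ℝ) ≤ ((2 * ((L₀ : ℤ) + 1) : ℤ) : ℝ) := by
              push_cast
              linarith
            exact_mod_cast h4
        · rintro x ⟨hx, -⟩ y ⟨hy, -⟩ h
          simp only [Prod.mk.injEq] at h
          obtain ⟨h1, h2⟩ := h
          have h3 : x - y = (c x - c y) • b := by
            rw [hπ, hπ] at h1
            have : x - y = (x - c x • b) - (y - c y • b) + (c x - c y) • b := by module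
            rw [this, h1]; module
          by_contra hxy
          have h4 := hbmin (x - y) (Λ.sub_mem hx hy) (sub_ne_zero.2 hxy)
          rw [h3, norm_smul, Real.norm_eq_abs] at h4
          have h5 := Int.abs_sub_lt_one_of_floor_eq_floor h2
          nlinarith
      rw [Set.ncard_prod] at hcount
      have hIcc : (Set.Icc (-(2 * ((L₀ : ℤ) + 1))) (2 * ((L₀ : ℤ) + 1))).ncard
          ≤ 5 * (L₀ + 1) := by
        rw [← coe_Icc, Set.ncard_coe_finset, Int.card_Icc]
        omega
      have hprod : ∏ i, ((L' i : ℝ) + 1) ≤ 4 ^ n * ∏ i, (((L' i / 4 : ℕ) : ℝ) + 1) := by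
        calc _ ≤ ∏ i : Fin n, (4 * (((L' i / 4 : ℕ) : ℝ) + 1)) := by
              refine prod_le_prod (fun i _ => by positivity) fun i _ => ?_
              have : L' i + 1 ≤ 4 * (L' i / 4 + 1) := by omega
              exact_mod_cast this
          _ = _ := by rw [prod_mul_distrib, prod_const, card_univ, Fintype.card_fin]
      rw [Fin.prod_univ_succ]
      simp only [Fin.cons_zero, Fin.cons_succ]
      set p : ℝ := ∏ i, (((L' i / 4 : ℕ) : ℝ) + 1) with hp
      have hp0 : 0 ≤ p := prod_nonneg fun i _ => by positivity
      calc (({x | x ∈ Λ ∧ ‖x‖ ≤ R}.ncard : ℕ) : ℝ)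
          ≤ ({x | x ∈ Λ.map π.toAddMonoidHom ∧ ‖x‖ ≤ R}.ncard : ℝ) *
            (Set.Icc (-(2 * ((L₀ : ℤ) + 1))) (2 * ((L₀ : ℤ) + 1))).ncard := by
              exact_mod_cast hcount
        _ ≤ (C * (4 ^ n * p)) * ((5 * (L₀ + 1) : ℕ) : ℝ) := by
          gcongr
          exact hcard'.trans (by gcongr)
        _ = (5 * 4 ^ n * C) * (((L₀ : ℝ) + 1) * p) := by push_cast; ring
        _ ≤ _ := by
          gcongr
          linarith

/-- A Bohr set in `ZMod m` with `d` frequencies contains a proper progression of dimension `d + 1` and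
of positive density. It comes from the lattice `Λ` of all integer vectors congruent to a multiple
of `(1, r)` modulo `m`: a short vector of `Λ` determines a point of `ZMod m` (its coordinate `0`,
whence the extra frequency `1`), and that point lies in the Bohr set. -/
theorem bohr_gap (d : ℕ) : ∃ C : ℝ, 0 < C ∧ ∀ (m : ℕ) [NeZero m] (r : Fin d → ZMod m),
    ∃ (v : Fin (d + 1) → ZMod m) (L : Fin (d + 1) → ℕ),
      (∀ k : Fin (d + 1) → ℕ, (∀ i, k i ≤ L i) → ∀ j,
        0 ≤ (ZMod.stdAddChar (r j * ∑ i, k i • v i)).re) ∧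
      (∀ k k' : Fin (d + 1) → ℕ, (∀ i, k i ≤ L i) → (∀ i, k' i ≤ L i) →
        ∑ i, k i • v i = ∑ i, k' i • v i → k = k') ∧
      (m : ℝ) ≤ C * ∏ i, ((L i : ℝ) + 1) := by
  obtain ⟨C, hC, hgap⟩ := lattice_gap (V := EuclideanSpace ℝ (Fin (d + 1))) (d + 1)
  set T : ℕ := 4 * (d + 1) with hT
  have hT0 : (0 : ℝ) < T := by rw [hT]; positivity
  refine ⟨(T : ℝ) ^ (d + 1) * C, by positivity, fun m _ r => ?_⟩
  have hm0' : 0 < m := Nat.pos_of_neZero m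
  have hm0 : (0 : ℝ) < m := by exact_mod_cast hm0'
  set r' : Fin (d + 1) → ZMod m := Fin.cons 1 r with hr'
  let Λ : AddSubgroup (EuclideanSpace ℝ (Fin (d + 1))) :=
    { carrier := {y | ∃ (x : ZMod m) (z : Fin (d + 1) → ℤ),
        (∀ j, y j = z j) ∧ ∀ j, (z j : ZMod m) = r' j * x}
      zero_mem' := ⟨0, 0, by simp, by simp⟩
      add_mem' := by
        rintro y y' ⟨x, z, hy, hz⟩ ⟨x', z', hy', hz'⟩
        exact ⟨x + x', z + z', fun j => by simp [hy, hy'], fun j => by simp [hz, hz', mul_add]⟩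
      neg_mem' := by
        rintro y ⟨x, z, hy, hz⟩
        exact ⟨-x, -z, fun j => by simp [hy], fun j => by simp [hz]⟩ }
  have hΛ : ∀ y, y ∈ Λ ↔ ∃ (x : ZMod m) (z : Fin (d + 1) → ℤ),
      (∀ j, y j = z j) ∧ ∀ j, (z j : ZMod m) = r' j * x := fun y => Iff.rfl
  have hcoord : ∀ (y : EuclideanSpace ℝ (Fin (d + 1))) j, |y j| ≤ ‖y‖ := fun y j => by
    simpa using PiLp.norm_apply_le y j
  have hfin : ∀ R : ℝ, {y | y ∈ Λ ∧ ‖y‖ ≤ R}.Finite := by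
    intro R
    refine ((Fintype.piFinset fun _ : Fin (d + 1) =>
      Finset.Icc (-⌈R⌉) ⌈R⌉).finite_toSet.image
      fun z => WithLp.toLp 2 fun j => (z j : ℝ)).subset ?_
    rintro y ⟨⟨x, z, hy, hz⟩, hyR⟩
    refine ⟨z, ?_, ?_⟩
    · simp only [mem_coe, Fintype.mem_piFinset, mem_Icc]
      intro j
      have h1 := (hcoord y j).trans hyR
      rw [hy] at h1
      have h2 : ((|z j| : ℤ) : ℝ) ≤ ⌈R⌉ := by
        push_cast
        exact h1.trans (Int.le_ceil R)
      exact abs_le.1 (by exact_mod_cast h2)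
    · ext j
      simp [hy]
  obtain ⟨y, L, hyΛ, hL, hinj, hcard⟩ := hgap Λ ⊤ (by simp) (fun _ _ => trivial) hfin
    (m / 4) (by positivity)
  choose x z hyz hzx using fun i => (hΛ (y i)).1 (hyΛ i)
  -- points of the progression have small coordinates
  have hsmall : ∀ k : Fin (d + 1) → ℕ, (∀ i, k i ≤ L i) → ∀ j,
      |((∑ i, (k i : ℤ) * z i j : ℤ) : ℝ)| ≤ m / 4 := by
    intro k hk j
    have h1 : ((∑ i, (k i : ℤ) * z i j : ℤ) : ℝ) = (∑ i, k i • y i) j := by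
      push_cast
      simp [hyz]
    rw [h1]
    refine (hcoord _ j).trans ((norm_sum_le _ _).trans (le_trans (sum_le_sum fun i _ => ?_) hL))
    rw [← Nat.cast_smul_eq_nsmul ℝ, norm_smul, Real.norm_natCast]
    have : (k i : ℝ) ≤ L i := by exact_mod_cast hk i
    gcongr
  have hcast : ∀ (k : Fin (d + 1) → ℕ) j,
      ((∑ i, (k i : ℤ) * z i j : ℤ) : ZMod m) = r' j * ∑ i, k i • x i := by
    intro k j
    push_cast
    rw [mul_sum]
    refine sum_congr rfl fun i _ => ?_
    rw [hzx, nsmul_eq_mul]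
    ring
  refine ⟨x, L, ?_, ?_, ?_⟩
  · intro k hk j
    have h1 := hcast k j.succ
    simp only [hr', Fin.cons_succ] at h1
    rw [← h1, ZMod.stdAddChar_coe]
    have h2 := abs_le.1 (hsmall k hk j.succ)
    set Z : ℤ := ∑ i, (k i : ℤ) * z i j.succ
    have h3 : (2 * (Real.pi : ℂ) * Complex.I * (Z : ℂ) / (m : ℂ)) =
        ((2 * Real.pi * Z / m : ℝ) : ℂ) * Complex.I := by
      push_cast
      ring
    rw [h3, Complex.exp_ofReal_mul_I_re]
    have hpi := Real.pi_pos
    apply Real.cos_nonneg_of_neg_pi_div_two_le_of_le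
    · rw [le_div_iff₀ hm0]
      nlinarith
    · rw [div_le_iff₀ hm0]
      nlinarith
  · intro k k' hk hk' h
    refine hinj k k' hk hk' ?_
    ext j
    have h1 := hcast k j
    rw [h, ← hcast k' j, ZMod.intCast_eq_intCast_iff_dvd_sub] at h1
    have h2 := abs_le.1 (hsmall k hk j)
    have h3 := abs_le.1 (hsmall k' hk' j)
    have h4 : ∑ i, (k' i : ℤ) * z i j - ∑ i, (k i : ℤ) * z i j = 0 := by
      refine Int.eq_zero_of_abs_lt_dvd h1 ?_
      have : |((∑ i, (k' i : ℤ) * z i j - ∑ i, (k i : ℤ) * z i j : ℤ) : ℝ)| < m := by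
        rw [Int.cast_sub, abs_lt]
        constructor <;> linarith
      exact_mod_cast this
    have h5 : ∑ i, (k i : ℝ) * z i j = ∑ i, (k' i : ℝ) * z i j := by
      exact_mod_cast (sub_eq_zero.1 h4).symm
    simpa [hyz] using h5
  · -- pigeonhole over cells of side `m / T`
    set cell : ZMod m → (Fin (d + 1) → ℕ) := fun x j => (r' j * x).val * T / m with hcell
    obtain ⟨κ, -, hκ⟩ : ∃ κ ∈ Fintype.piFinset fun _ : Fin (d + 1) => Finset.range T,
        m ≤ T ^ (d + 1) * ((Finset.univ : Finset (ZMod m)).filter fun x => cell x = κ).card := by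
      by_contra! h
      have h1 := card_eq_sum_card_fiberwise (f := cell) (s := (Finset.univ : Finset (ZMod m)))
        (t := Fintype.piFinset fun _ : Fin (d + 1) => Finset.range T) (by
          intro x _
          simp only [mem_coe, Fintype.mem_piFinset, mem_range]
          intro j
          rw [hcell, Nat.div_lt_iff_lt_mul hm0', mul_comm T]
          exact Nat.mul_lt_mul_of_pos_right (ZMod.val_lt _) (by omega))
      have h2 := sum_lt_sum_of_nonempty
        (s := Fintype.piFinset fun _ : Fin (d + 1) => Finset.range T)
        ⟨fun _ => 0, by simp [hT]⟩ h
      rw [← mul_sum, ← h1, sum_const, card_univ, ZMod.card] at h2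
      simp at h2
    set S := (Finset.univ : Finset (ZMod m)).filter fun x => cell x = κ with hS
    have hSle : S.card ≤ {y | y ∈ Λ ∧ ‖y‖ ≤ (m : ℝ) / 4}.ncard := by
      rcases S.eq_empty_or_nonempty with h0 | ⟨x₀, hx₀⟩
      · simp [h0]
      rw [← Set.ncard_coe_finset]
      refine Set.ncard_le_ncard_of_injOn (fun x => WithLp.toLp 2 fun j =>
        (((r' j * x).val : ℝ) - (r' j * x₀).val)) ?_ ?_ (hfin _)
      · intro x hx
        refine ⟨⟨x - x₀, fun j => ((r' j * x).val : ℤ) - (r' j * x₀).val, fun j => by simp,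
          fun j => by simp [mul_sub]⟩, ?_⟩
        have hd : ∀ j, |((r' j * x).val : ℝ) - (r' j * x₀).val| ≤ m / T := by
          intro j
          have h1 : cell x j = κ j := congrFun (mem_filter.1 hx).2 j
          have h2 : cell x₀ j = κ j := congrFun (mem_filter.1 hx₀).2 j
          simp only [hcell] at h1 h2
          rw [Nat.div_eq_iff hm0'] at h1 h2
          obtain ⟨h1a, h1b⟩ := h1
          obtain ⟨h2a, h2b⟩ := h2
          have h3 : (r' j * x).val * T ≤ (r' j * x₀).val * T + m := by omega
          have h4 : (r' j * x₀).val * T ≤ (r' j * x).val * T + m := by omega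
          have h3' : ((r' j * x).val : ℝ) * T ≤ (r' j * x₀).val * T + m := by exact_mod_cast h3
          have h4' : ((r' j * x₀).val : ℝ) * T ≤ (r' j * x).val * T + m := by exact_mod_cast h4
          rw [le_div_iff₀ hT0, ← abs_of_pos hT0, ← abs_mul, abs_le]
          constructor <;> linarith
        refine le_of_sq_le_sq ?_ (by positivity)
        rw [EuclideanSpace.real_norm_sq_eq]
        calc _ ≤ ∑ j : Fin (d + 1), ((m : ℝ) / T) ^ 2 := by
              refine sum_le_sum fun j _ => ?_
              rw [← sq_abs]
              have := hd j
              gcongr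
          _ = ((d : ℝ) + 1) * (m / T) ^ 2 := by simp
          _ ≤ ((d : ℝ) + 1) ^ 2 * (m / T) ^ 2 := by
              gcongr
              have : (0 : ℝ) ≤ d := by positivity
              nlinarith
          _ = _ := by
              rw [hT]; push_cast; field_simp
      · intro x _ x' _ h
        have h1 := congrArg (fun y : EuclideanSpace ℝ (Fin (d + 1)) => y 0) h
        simp only [hr', Fin.cons_zero, one_mul, sub_left_inj, Nat.cast_inj] at h1
        exact ZMod.val_injective m h1
    have h1 : (m : ℝ) ≤ (T : ℝ) ^ (d + 1) * S.card := by exact_mod_cast hκ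
    have h2 : (S.card : ℝ) ≤ {y | y ∈ Λ ∧ ‖y‖ ≤ (m : ℝ) / 4}.ncard := by exact_mod_cast hSle
    calc _ ≤ _ := h1
      _ ≤ (T : ℝ) ^ (d + 1) * (C * ∏ i, ((L i : ℝ) + 1)) := by
        gcongr
        exact h2.trans hcard
      _ = _ := by ring

/-! ### Freiman's theorem for a large subset -/

/-- A proper progression in `2φ(A) - 2φ(A)` lifts along a Freiman isomorphism `φ` of order six to
a proper progression in `2A - 2A`. Order six is what makes the lift additive: `x + y = z` with
all three in `2A - 2A` is an equation between sums of six elements. -/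
theorem pull_back {G : Type*} [AddCommGroup G] {n : ℕ} (A : Finset ℤ) (φ : ℤ → G)
    (hφ : ∀ a b : Fin 6 → ℤ, (∀ i, a i ∈ A) → (∀ i, b i ∈ A) →
      (∑ i, φ (a i) = ∑ i, φ (b i) ↔ ∑ i, a i = ∑ i, b i))
    (v : Fin n → G) (L : Fin n → ℕ)
    (hinj : ∀ k k' : Fin n → ℕ, (∀ i, k i ≤ L i) → (∀ i, k' i ≤ L i) →
        ∑ i, k i • v i = ∑ i, k' i • v i → k = k')
    (hmem : ∀ k : Fin n → ℕ, (∀ i, k i ≤ L i) → ∃ a : Fin 4 → ℤ, (∀ i, a i ∈ A) ∧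
      ∑ i, k i • v i = φ (a 0) - φ (a 1) + (φ (a 2) - φ (a 3))) :
    ∃ w : Fin n → ℤ,
      (∀ k : Fin n → ℕ, (∀ i, k i ≤ L i) → ∃ a : Fin 4 → ℤ, (∀ i, a i ∈ A) ∧
        ∑ i, (k i : ℤ) * w i = a 0 - a 1 + (a 2 - a 3)) ∧
      ∀ k k' : Fin n → ℕ, (∀ i, k i ≤ L i) → (∀ i, k' i ≤ L i) →
        ∑ i, (k i : ℤ) * w i = ∑ i, (k' i : ℤ) * w i → k = k' := by
  choose! a haA ha using hmem
  set F : (Fin n → ℕ) → ℤ := fun k => a k 0 - a k 1 + (a k 2 - a k 3) with hF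
  have hadd : ∀ k k' : Fin n → ℕ, (∀ i, k i + k' i ≤ L i) → F (k + k') = F k + F k' := by
    intro k k' h
    have hk : ∀ i, k i ≤ L i := fun i => (Nat.le_add_right _ _).trans (h i)
    have hk' : ∀ i, k' i ≤ L i := fun i => (Nat.le_add_left _ _).trans (h i)
    have hA := haA (k + k') h
    have h1 := ha k hk
    have h2 := ha k' hk'
    have h3 := ha (k + k') h
    have h4 : ∑ i, (k + k') i • v i = ∑ i, k i • v i + ∑ i, k' i • v i := by
      simp [add_smul, sum_add_distrib]
    rw [h1, h2, h3] at h4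
    have h5 := (hφ ![a (k + k') 0, a (k + k') 2, a k 1, a k 3, a k' 1, a k' 3]
      ![a (k + k') 1, a (k + k') 3, a k 0, a k 2, a k' 0, a k' 2]
      (by intro i; fin_cases i <;> simp [hA, haA _ hk, haA _ hk'])
      (by intro i; fin_cases i <;> simp [hA, haA _ hk, haA _ hk'])).1
      (by
        simp only [Fin.sum_univ_six, Matrix.cons_val]
        rw [← sub_eq_zero] at h4 ⊢
        rw [← h4]
        abel)
    simp only [Fin.sum_univ_six, Matrix.cons_val] at h5
    simp only [hF]
    linarith
  have hF0 : F 0 = 0 := by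
    have := hadd 0 0 (by simp)
    rw [add_zero] at this
    linarith
  set w : Fin n → ℤ := fun i => F (Pi.single i 1) with hw
  -- induction on the sum of the coordinates
  have hlin : ∀ s : ℕ, ∀ k : Fin n → ℕ, ∑ i, k i = s → (∀ i, k i ≤ L i) →
      F k = ∑ i, (k i : ℤ) * w i := by
    intro s
    induction s with
    | zero =>
      intro k hs _
      have : k = 0 := by
        ext i
        exact (Finset.sum_eq_zero_iff.1 hs) i (mem_univ i)
      simp [this, hF0]
    | succ s ih =>
      intro k hs hk
      obtain ⟨i, hi⟩ : ∃ i, k i ≠ 0 := by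
        by_contra! h
        simp [h] at hs
      have hdec : k = (k - Pi.single i 1) + Pi.single i 1 := by
        ext j
        by_cases hj : j = i
        · subst hj
          simp
          omega
        · simp [hj]
      set k' := k - Pi.single i 1 with hk'
      have h1 : ∑ j, k' j = s := by
        rw [hdec] at hs
        simpa [sum_add_distrib] using hs
      have h2 : ∀ j, k' j ≤ L j := fun j => (Nat.sub_le _ _).trans (hk j)
      have h3 := hadd k' (Pi.single i 1) (fun j => by
        have := hk j
        rw [hdec] at this
        exact this)
      rw [← hdec] at h3
      rw [h3, ih k' h1 h2, hdec]
      simp [add_mul, sum_add_distrib, Pi.single_apply, hw]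
  refine ⟨w, fun k hk => ⟨a k, haA k hk, (hlin _ k rfl hk).symm⟩, fun k k' hk hk' h => ?_⟩
  rw [← hlin _ k rfl hk, ← hlin _ k' rfl hk'] at h
  simp only [hF] at h
  refine hinj k k' hk hk' ?_
  rw [ha k hk, ha k' hk']
  have h5 := (hφ ![a k 0, a k 2, a k' 1, a k' 3, a k 0, a k 0]
      ![a k 1, a k 3, a k' 0, a k' 2, a k 0, a k 0]
      (by intro i; fin_cases i <;> simp [haA _ hk, haA _ hk'])
      (by intro i; fin_cases i <;> simp [haA _ hk, haA _ hk'])).2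
      (by
        simp only [Fin.sum_univ_six, Matrix.cons_val]
        linarith)
  simp only [Fin.sum_univ_six, Matrix.cons_val] at h5
  rw [← sub_eq_zero] at h5 ⊢
  rw [← h5]
  abel

open scoped Pointwise in
/-- The Plünnecke-Ruzsa inequality, with membership in `pA - qA` expressed through sums over `Fin`. -/
theorem sumset_bound (A : Finset ℤ) (hA : A.Nonempty) (C : ℝ)
    (h : ((A - A).card : ℝ) ≤ C * A.card) (p q : ℕ) :
    ∃ T : Finset ℤ, (T.card : ℝ) ≤ C ^ (p + q) * A.card ∧
      ∀ (a : Fin p → ℤ) (b : Fin q → ℤ), (∀ i, a i ∈ A) → (∀ i, b i ∈ A) →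
        ∑ i, a i - ∑ i, b i ∈ T := by
  have hA0 : (0 : ℝ) < A.card := by exact_mod_cast hA.card_pos
  refine ⟨p • A - q • A, ?_, fun a b ha hb => sub_mem_sub ?_ ?_⟩
  · have h1 := pluennecke_ruzsa_inequality_nsmul_sub_nsmul_sub hA A p q
    have h2 : ((p • A - q • A).card : ℝ) ≤ ((A - A).card / A.card : ℝ) ^ (p + q) * A.card := by
      have h3 := (NNRat.cast_le (K := ℝ)).2 h1
      push_cast at h3
      exact h3
    refine h2.trans ?_
    gcongr
    rwa [div_le_iff₀ hA0]
  · rw [← mem_coe, coe_nsmul, Set.mem_nsmul_iff_sum]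
    exact ⟨a, ha, rfl⟩
  · rw [← mem_coe, coe_nsmul, Set.mem_nsmul_iff_sum]
    exact ⟨b, hb, rfl⟩

/-- If `A + Q` is contained in a small set, a reflected translate `s - Q` contains much of `A`. -/
theorem exists_translate (A Q T : Finset ℤ) (hA : A.Nonempty) (hQ : Q.Nonempty)
    (hsum : ∀ x ∈ A, ∀ y ∈ Q, x + y ∈ T) (b : ℝ) (hb : T.card * b ≤ A.card * Q.card) :
    ∃ s : ℤ, b ≤ (A.filter fun x => s - x ∈ Q).card := by
  have hsum' : ∀ x ∈ A ×ˢ Q, x.1 + x.2 ∈ T := fun x hx =>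
    hsum _ (mem_product.1 hx).1 _ (mem_product.1 hx).2
  have hT : T.Nonempty := by
    obtain ⟨x, hx⟩ := hA
    obtain ⟨y, hy⟩ := hQ
    exact ⟨_, hsum x hx y hy⟩
  obtain ⟨s, -, hs⟩ := exists_le_card_fiber_of_nsmul_le_card_of_maps_to (b := b) hsum' hT (by
    rw [nsmul_eq_mul, card_product]
    push_cast
    exact hb)
  refine ⟨s, hs.trans ?_⟩
  have : ((A ×ˢ Q).filter fun x => x.1 + x.2 = s).card ≤
      (A.filter fun x => s - x ∈ Q).card := by
    refine card_le_card_of_injOn Prod.fst ?_ ?_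
    · rintro ⟨x, y⟩ hxy
      simp only [coe_filter, mem_product, Set.mem_ofPred_eq] at hxy ⊢
      refine ⟨hxy.1.1, ?_⟩
      rw [← hxy.2]
      simpa using hxy.1.2
    · rintro ⟨x, y⟩ hxy ⟨x', y'⟩ hxy' h
      simp only [coe_filter, mem_product, Set.mem_ofPred_eq] at hxy hxy' h
      ext
      · exact h
      · simp only
        linarith [hxy.2, hxy'.2]
  exact_mod_cast this

open scoped Pointwise in
/-- A set of integers with large additive energy has a proportional subset contained in
a progression of bounded dimension and proportional size. -/
theorem weak_freiman (κ : ℝ) (hκ : 0 < κ) : ∃ d : ℕ, 0 < d ∧ ∃ c K : ℝ, 0 < c ∧ 0 < K ∧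
    ∀ A : Finset ℤ, A.Nonempty → κ * (A.card : ℝ) ^ 3 ≤ (_root_.addEnergy A : ℝ) →
      ∃ A' ⊆ A, c * A.card ≤ A'.card ∧ ∃ (h : ℤ) (k : Fin d → ℤ) (s : Fin d → ℕ),
        (∀ j, 0 < s j) ∧ A' ⊆ dimAP d h k s ∧ ((∏ j, s j : ℕ) : ℝ) ≤ K * A.card := by
  obtain ⟨c, C₀, hc, hC₀, hbsg⟩ := bsg κ hκ
  obtain ⟨C, hC⟩ : ∃ C, C = C₀ / c := ⟨_, rfl⟩
  have hC0 : 0 < C := by rw [hC]; positivity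
  obtain ⟨M, hM⟩ : ∃ M, M = 2 * C ^ 12 + 1 := ⟨_, rfl⟩
  have hM0 : 0 < M := by rw [hM]; positivity
  obtain ⟨D, hD⟩ : ∃ D, D = ⌈36 * M ^ 2⌉₊ := ⟨_, rfl⟩
  obtain ⟨C₂, hC₂, hgap⟩ := bohr_gap D
  refine ⟨D + 1, by omega, c / (36 * C₂ * C ^ 5), C ^ 4, by positivity, by positivity, ?_⟩
  intro A hA hE
  obtain ⟨A₁, hA₁, hcard₁, hdiff₀⟩ := hbsg A hA hE
  have hA0 : (0 : ℝ) < A.card := by exact_mod_cast hA.card_pos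
  have hA₁0 : (0 : ℝ) < A₁.card := lt_of_lt_of_le (by positivity) hcard₁
  have hA₁n : A₁.Nonempty := card_pos.1 (by exact_mod_cast hA₁0)
  have hdiff : ((A₁ - A₁).card : ℝ) ≤ C * A₁.card := by
    refine hdiff₀.trans ?_
    rw [hC, div_mul_eq_mul_div, le_div_iff₀ hc]
    nlinarith
  obtain ⟨T, hT, hTmem⟩ := sumset_bound A₁ hA₁n C hdiff 6 6
  set m := 2 * T.card + 1 with hm
  have : NeZero m := ⟨by omega⟩
  have hmM : (m : ℝ) ≤ M * A₁.card := by
    have : (1 : ℝ) ≤ A₁.card := by exact_mod_cast hA₁n.card_pos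
    rw [hm, hM]
    push_cast
    norm_num at hT
    linarith
  obtain ⟨A₂, hA₂, hcard₂, φ, hφ⟩ := model A₁ T hTmem m (by omega)
  have hcard₂' : (A₁.card : ℝ) ≤ 6 * A₂.card := by exact_mod_cast hcard₂
  have hA₂n : A₂.Nonempty := card_pos.1 (by have := hA₁n.card_pos; omega)
  have hA₂0 : (0 : ℝ) < A₂.card := by exact_mod_cast hA₂n.card_pos
  have hφinj : Set.InjOn φ A₂ := by
    intro x hx y hy hxy
    have := (hφ (fun _ => x) (fun _ => y) (fun _ => hx) (fun _ => hy)).1 (by simp [hxy])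
    simpa using this
  have hB : (A₂.image φ).card = A₂.card := card_image_of_injOn hφinj
  have hBm : (A₂.card : ℝ) ≤ m := by
    rw [← hB]
    have := card_le_univ (A₂.image φ)
    rw [ZMod.card] at this
    exact_mod_cast this
  obtain ⟨Γ, hΓ, hbog⟩ := bogolyubov m (A₂.image φ) (hA₂n.image φ)
  have hΓD : Γ.card ≤ D := by
    have h1 : (Γ.card : ℝ) ≤ 36 * M ^ 2 := by
      rw [hB] at hΓ
      have h2 : (m : ℝ) ^ 2 ≤ (36 * M ^ 2) * (A₂.card : ℝ) ^ 2 :=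
        calc (m : ℝ) ^ 2 ≤ (M * (6 * A₂.card)) ^ 2 := by
              have : (m : ℝ) ≤ M * (6 * A₂.card) := hmM.trans (by gcongr)
              gcongr
          _ = _ := by ring
      exact le_of_mul_le_mul_right (hΓ.trans h2) (by positivity)
    rw [hD]
    exact_mod_cast h1.trans (Nat.le_ceil _)
  -- list the frequencies, padding with the trivial one
  obtain ⟨r, hr⟩ : ∃ r : Fin D → ZMod m, ∀ γ ∈ Γ, ∃ j, r j = γ := by
    refine ⟨fun j => if h : (j : ℕ) < Γ.card then Γ.equivFin.symm ⟨j, h⟩ else 0, fun γ hγ => ?_⟩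
    refine ⟨⟨Γ.equivFin ⟨γ, hγ⟩, lt_of_lt_of_le (Fin.is_lt _) hΓD⟩, ?_⟩
    simp
  obtain ⟨v, L, hvre, hvinj, hmL⟩ := hgap m r
  obtain ⟨w, hw, hwinj⟩ := pull_back A₂ φ hφ v L hvinj (by
    intro k hk
    obtain ⟨b₁, h₁, b₂, h₂, b₃, h₃, b₄, h₄, h⟩ := hbog (∑ i, k i • v i) (by
      intro γ hγ
      obtain ⟨j, rfl⟩ := hr γ hγ
      exact hvre k hk j)
    obtain ⟨a₁, h₁, rfl⟩ := mem_image.1 h₁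
    obtain ⟨a₂, h₂, rfl⟩ := mem_image.1 h₂
    obtain ⟨a₃, h₃, rfl⟩ := mem_image.1 h₃
    obtain ⟨a₄, h₄, rfl⟩ := mem_image.1 h₄
    exact ⟨![a₁, a₂, a₃, a₄], by intro i; fin_cases i <;> simpa, h⟩)
  set box := Fintype.piFinset fun j => Finset.range (L j + 1) with hbox
  have hbox_mem : ∀ k, k ∈ box ↔ ∀ i, k i ≤ L i := fun k => by
    simp [hbox]
  set Q : Finset ℤ := box.image fun k => ∑ i, (k i : ℤ) * w i with hQ
  have hQcard : Q.card = ∏ j, (L j + 1) := by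
    rw [hQ, card_image_of_injOn, hbox, Fintype.card_piFinset]
    · simp
    · intro k hk k' hk' h
      exact hwinj k k' ((hbox_mem k).1 hk) ((hbox_mem k').1 hk') h
  obtain ⟨T₂, hT₂, hT₂mem⟩ := sumset_bound A₁ hA₁n C hdiff 3 2
  obtain ⟨T₃, hT₃, hT₃mem⟩ := sumset_bound A₁ hA₁n C hdiff 2 2
  norm_num at hT₂ hT₃
  have hQT₃ : Q ⊆ T₃ := by
    intro x hx
    obtain ⟨k, hk, rfl⟩ := mem_image.1 hx
    obtain ⟨a, ha, h⟩ := hw k ((hbox_mem k).1 hk)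
    have := hT₃mem ![a 0, a 2] ![a 1, a 3]
      (by intro i; fin_cases i <;> exact hA₂ (ha _))
      (by intro i; fin_cases i <;> exact hA₂ (ha _))
    simp only [Fin.sum_univ_two, Matrix.cons_val] at this
    rw [h]
    convert this using 1
    ring
  have hsum : ∀ x ∈ A₂, ∀ y ∈ Q, x + y ∈ T₂ := by
    intro x hx y hy
    obtain ⟨k, hk, rfl⟩ := mem_image.1 hy
    obtain ⟨a, ha, h⟩ := hw k ((hbox_mem k).1 hk)
    have := hT₂mem ![x, a 0, a 2] ![a 1, a 3]
      (by intro i; fin_cases i <;> first | exact hA₂ hx | exact hA₂ (ha _))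
      (by intro i; fin_cases i <;> exact hA₂ (ha _))
    simp only [Fin.sum_univ_two, Fin.sum_univ_three, Matrix.cons_val] at this
    rw [h]
    convert this using 1
    ring
  have hmQ : (m : ℝ) ≤ C₂ * Q.card := by
    rw [hQcard]
    push_cast
    exact hmL
  have hQn : Q.Nonempty := by
    refine card_pos.1 ?_
    rw [hQcard]
    exact prod_pos fun _ _ => by omega
  -- `|T₂| ≤ C ^ 5 * |A₁|` while `|Q| ≥ m / C₂ ≥ |A₂| / C₂` and `|A₂| ≥ |A₁| / 6`
  obtain ⟨s, hs⟩ := exists_translate A₂ Q T₂ hA₂n hQn hsum (c / (36 * C₂ * C ^ 5) * A.card) (by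
    calc (T₂.card : ℝ) * (c / (36 * C₂ * C ^ 5) * A.card)
          ≤ (C ^ 5 * A₁.card) * (c / (36 * C₂ * C ^ 5) * A.card) := by gcongr
        _ = A₁.card * (c * A.card) / (36 * C₂) := by field_simp
        _ ≤ (6 * A₂.card) * (6 * (C₂ * Q.card)) / (36 * C₂) := by
            have : c * A.card ≤ 6 * (C₂ * Q.card) := by linarith
            gcongr
        _ = _ := by field_simp; norm_num)
  refine ⟨A₂.filter fun x => s - x ∈ Q, (filter_subset _ _).trans (hA₂.trans hA₁), hs,
    s - ∑ i, (L i : ℤ) * w i, w, fun i => L i + 1, fun _ => Nat.succ_pos _, ?_, ?_⟩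
  · intro x hx
    obtain ⟨k, hk, h⟩ := mem_image.1 (mem_filter.1 hx).2
    have hk' := (hbox_mem k).1 hk
    refine mem_image.2 ⟨fun i => L i - k i, ?_, ?_⟩
    · simp only [Fintype.mem_piFinset, mem_range]
      intro i
      omega
    · have : ∑ i, ((L i - k i : ℕ) : ℤ) * w i =
          ∑ i, (L i : ℤ) * w i - ∑ i, (k i : ℤ) * w i := by
        rw [← sum_sub_distrib]
        refine sum_congr rfl fun i _ => ?_
        rw [Nat.cast_sub (hk' i)]
        ring
      rw [this]
      linarith
  · rw [← hQcard]
    have h1 : (Q.card : ℝ) ≤ T₃.card := by exact_mod_cast card_le_card hQT₃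
    have h2 : (A₁.card : ℝ) ≤ A.card := by exact_mod_cast card_le_card hA₁
    refine h1.trans (hT₃.trans ?_)
    exact mul_le_mul_of_nonneg_left h2 (by positivity)

/-! ### Energy of quasi-arithmetic sequences -/

/-- Cauchy-Schwarz: `|A| ^ 4 ≤ |P + P| * E(A)` if `A` is contained in a progression `P`. -/
theorem card_pow_four_le (A : Finset ℤ) (d : ℕ) (h : ℤ) (k : Fin d → ℤ) (s : Fin d → ℕ)
    (hA : A ⊆ dimAP d h k s) :
    A.card ^ 4 ≤ 2 ^ d * (∏ j, s j) * _root_.addEnergy A := by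
  set U := dimAP d (2 * h) k fun j => 2 * s j with hU
  have hUcard : U.card ≤ 2 ^ d * ∏ j, s j := by
    refine card_image_le.trans ?_
    simp [Fintype.card_piFinset, prod_mul_distrib]
  have hsum : ∀ x ∈ A ×ˢ A, x.1 + x.2 ∈ U := by
    intro x hx
    obtain ⟨r, hr, h1⟩ := mem_image.1 (hA (mem_product.1 hx).1)
    obtain ⟨r', hr', h2⟩ := mem_image.1 (hA (mem_product.1 hx).2)
    rw [Fintype.mem_piFinset] at hr hr'
    refine mem_image.2 ⟨r + r', ?_, ?_⟩
    · rw [Fintype.mem_piFinset]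
      intro j
      have := mem_range.1 (hr j)
      have := mem_range.1 (hr' j)
      simp only [Pi.add_apply, mem_range]
      omega
    · rw [← h1, ← h2]
      simp only [Pi.add_apply, Nat.cast_add, add_mul, sum_add_distrib]
      ring
  have hE : Finset.addEnergy A A ≤ _root_.addEnergy A := by
    refine card_le_card_of_injOn (fun x => ((x.1.1, x.2.1), (x.1.2, x.2.2))) ?_ ?_
    · intro x hx
      simp only [coe_filter, mem_product, Set.mem_ofPred_eq] at hx ⊢
      tauto
    · rintro ⟨⟨x, y⟩, z, w⟩ _ ⟨⟨x', y'⟩, z', w'⟩ _ hxy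
      simp only [Prod.mk.injEq] at hxy ⊢
      tauto
  have hCS := card_sq_le_card_mul_addEnergy A A U
  rw [filter_true_of_mem hsum, card_product] at hCS
  calc A.card ^ 4 = (A.card * A.card) ^ 2 := by ring
    _ ≤ _ := hCS
    _ ≤ _ := Nat.mul_le_mul hUcard hE

theorem addEnergy_le_of_subset {A B : Finset ℤ} (h : A ⊆ B) : _root_.addEnergy A ≤ _root_.addEnergy B := by
  unfold _root_.addEnergy
  gcongr

theorem card_firstN (a : ℕ → ℕ) (ha : StrictMono a) (N : ℕ) : (firstN a N).card = N := by
  rw [firstN, card_image_of_injective]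
  · simp
  · intro x y h
    exact ha.injective (Nat.cast_injective (R := ℤ) h)

theorem stmt1 (a : ℕ → ℕ) (ha : StrictMono a) (ha_pos : ∀ n, 0 < a n) :
    (∃ κ : ℝ, 0 < κ ∧
        ∃ᶠ N : ℕ in atTop, κ * (N : ℝ) ^ 3 ≤ (addEnergy (firstN a N) : ℝ)) ↔
      ∃ d : ℕ, 0 < d ∧ QuasiArithmetic a d := by
  constructor
  · rintro ⟨κ, hκ, hfreq⟩
    obtain ⟨d, hd, c, K, hc, hK, hF⟩ := weak_freiman κ hκ
    obtain ⟨N, hN, hNE⟩ := extraction_of_frequently_atTop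
      (hfreq.and_eventually (eventually_gt_atTop 0))
    refine ⟨d, hd, c, K, hc, hK, N, hN, fun i => (hNE i).2, fun i => ?_⟩
    have := hF (firstN a (N i))
      (card_pos.1 (by rw [card_firstN a ha]; exact (hNE i).2))
      (by rw [card_firstN a ha]; exact (hNE i).1)
    rwa [card_firstN a ha] at this
  · rintro ⟨d, -, C, K, hC, hK, N, hN, hN0, h⟩
    refine ⟨C ^ 4 / (2 ^ d * K), by positivity, frequently_atTop.2 fun n => ⟨N n, hN.le_apply, ?_⟩⟩
    obtain ⟨A, hA, hAcard, x, k, s, -, hAs, hs⟩ := h n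
    have hN0' : (0 : ℝ) < N n := by exact_mod_cast hN0 n
    have h1 : (A.card : ℝ) ^ 4 ≤ 2 ^ d * ((∏ j, s j : ℕ) : ℝ) * _root_.addEnergy A := by
      exact_mod_cast card_pow_four_le A d x k s hAs
    have h2 : (_root_.addEnergy A : ℝ) ≤ _root_.addEnergy (firstN a (N n)) := by
      exact_mod_cast addEnergy_le_of_subset hA
    have h3 : (C * N n) ^ 4 ≤ 2 ^ d * (K * N n) * _root_.addEnergy (firstN a (N n)) :=
      calc _ ≤ (A.card : ℝ) ^ 4 := by gcongr
        _ ≤ _ := h1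
        _ ≤ _ := by gcongr
    rw [div_mul_eq_mul_div, div_le_iff₀ (by positivity)]
    refine le_of_mul_le_mul_right ?_ hN0'
    calc _ = (C * N n) ^ 4 := by ring
      _ ≤ _ := h3
      _ = _ := by ring
end

section
/- Let (x_n)_{n∈ℕ} be a sequence in [0,1). Suppose there exist constants τ > 0 and ψ > 0, a strictly increasing sequence (N_i)_{i≥1} of positive integers, and real numbers c_i with 0 ≤ c_i ≤ ψ/N_i such that for every i ≥ 1 the number of pairs (k,l) with 1 ≤ k ≠ l ≤ N_i and ‖x_k − x_l‖ = c_i is at least τ·N_i. Then (x_n)_{n∈ℕ} does not have Poissonian pair correlations. -/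
/-!
The bounded sequence `N_i * c_i` has a limit point `L`. Along a subsequence, the `τ * N_i` pairs at
distance exactly `c_i` all lie in the window `((L - δ) / N_i, (L + δ) / N_i]`. Poissonian pair
correlations would force that window to hold asymptotically at most `4 * δ * N_i` pairs (the part of
the window below `0` holds none), which is a contradiction as soon as `4 * δ < τ`.
The counting step is `pairCount_add_le`.
-/

open Finset Filter
open scoped Classical

/-- The pairs at distance exactly `c` are among those counted at scale `b` but not at scale `a`
whenever `a / N < c ≤ b / N`. -/
theorem pairCount_add_le (x : ℕ → ℝ) (N : ℕ) (a b c : ℝ) (ha : a / N < c) (hb : c ≤ b / N) :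
    pairCount x N a + (((Finset.Icc 1 N) ×ˢ (Finset.Icc 1 N)).filter
        fun p => p.1 ≠ p.2 ∧ nint (x p.1 - x p.2) = c).card ≤ pairCount x N b := by
  unfold pairCount
  rw [← Finset.card_union_of_disjoint]
  · apply Finset.card_le_card
    intro p hp
    simp only [Finset.mem_union, Finset.mem_filter] at hp ⊢
    rcases hp with ⟨h1, h2, h3⟩ | ⟨h1, h2, h3⟩
    · exact ⟨h1, h2, by linarith⟩
    · exact ⟨h1, h2, by linarith⟩
  · rw [Finset.disjoint_left]
    intro p hp hq
    simp only [Finset.mem_filter] at hp hq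
    linarith [hp.2.2, hq.2.2]

theorem stmt9 (x : ℕ → ℝ) (hx : ∀ n, x n ∈ Set.Ico (0 : ℝ) 1)
    (τ ψ : ℝ) (hτ : 0 < τ) (hψ : 0 < ψ)
    (Ni : ℕ → ℕ) (hNi : StrictMono Ni) (hNipos : ∀ i, 0 < Ni i)
    (c : ℕ → ℝ) (hc0 : ∀ i, 0 ≤ c i) (hcψ : ∀ i, c i ≤ ψ / Ni i)
    (hcount : ∀ i, τ * Ni i ≤
      ((((Finset.Icc 1 (Ni i)) ×ˢ (Finset.Icc 1 (Ni i))).filter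
        fun p => p.1 ≠ p.2 ∧ nint (x p.1 - x p.2) = c i).card : ℝ)) :
    ¬ PoissonianPairCorrelations x := by
  intro hP
  have hNR : ∀ i, (0 : ℝ) < Ni i := fun i => by exact_mod_cast hNipos i
  obtain ⟨L, hL, φ, hφ, hlim⟩ := isCompact_Icc.tendsto_subseq (x := fun i => c i * Ni i)
    (s := Set.Icc (0 : ℝ) ψ)
    (fun i => ⟨mul_nonneg (hc0 i) (hNR i).le, (le_div_iff₀ (hNR i)).1 (hcψ i)⟩)
  have hN : Tendsto (fun k => Ni (φ k)) atTop atTop := (hNi.comp hφ).tendsto_atTop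
  obtain ⟨δ, hδ, hδτ⟩ : ∃ δ : ℝ, 0 < δ ∧ 4 * δ < τ := ⟨τ / 8, by linarith, by linarith⟩
  have hb := (hP (L + δ) (by linarith [hL.1])).comp hN
  have hwindow : ∀ᶠ k in atTop,
      (pairCount x (Ni (φ k)) (L - δ) : ℝ) / Ni (φ k) + τ
        ≤ (pairCount x (Ni (φ k)) (L + δ) : ℝ) / Ni (φ k) := by
    filter_upwards [hlim.eventually (Ioo_mem_nhds (sub_lt_self L hδ) (lt_add_of_pos_right L hδ))]
      with k hk
    have hpos := hNR (φ k)
    have h := pairCount_add_le x (Ni (φ k)) (L - δ) (L + δ) (c (φ k))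
      ((div_lt_iff₀ hpos).2 hk.1) ((le_div_iff₀ hpos).2 hk.2.le)
    have h' : (pairCount x (Ni (φ k)) (L - δ) : ℝ) + τ * Ni (φ k)
        ≤ pairCount x (Ni (φ k)) (L + δ) :=
      (add_le_add_right (hcount (φ k)) _).trans (by exact_mod_cast h)
    rw [le_div_iff₀ hpos, add_mul, div_mul_cancel₀ _ hpos.ne']
    exact h'
  -- The Poissonian hypothesis says nothing at scale `L - δ ≤ 0`; there the trivial bound
  -- `0 ≤ pairCount` is enough because `L + δ ≤ 2 * δ`.
  rcases le_or_gt (L - δ) 0 with h0 | h0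
  · have : τ ≤ 2 * (L + δ) := by
      refine ge_of_tendsto hb ?_
      filter_upwards [hwindow] with k hk
      exact (le_add_of_nonneg_left (by positivity)).trans hk
    linarith
  · have ha := (hP (L - δ) h0).comp hN
    have : 2 * (L - δ) + τ ≤ 2 * (L + δ) :=
      le_of_tendsto_of_tendsto (ha.add_const τ) hb hwindow
    linarith
end
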